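/- Let Φ be an aperiodic self-similar IFS on a compact interval I, let ν be a self-similar measure for Φ, and let g : I → ℝ be a C^{1+γ} smooth map (γ > 0) whose derivative does not vanish on I. Then the push-forward measure g_*ν is both pointwise absolutely normal and a Rajchman measure. -/

import Mathlib

/-!
*The measure `ν` is Rajchman.* Self-similarity makes `u ↦ ‖charFun ν (exp u)‖ ^ 2` a subsolution of
the renewal equation `ψ u = ∑ i, p i * ψ (u - ℓ i)` with steps `ℓ i = -log |r i|`. Since `ν` has no
atoms (`SelfSimilar.measure_singleton`), Wiener's lemma (`tendsto_wiener`) shows that its averages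
over windows tend to zero. Aperiodicity says that the steps are non-lattice; a Choquet-Deny argument
together with the conserved quantity `∑ i, p i ∫_{u - ℓ i}^u h` of the renewal equation then forces
such a subsolution to tend to zero (`tendsto_zero_of_subsolution`).

*The image measure is Rajchman.* By the cut-set principle (`SelfSimilar.integral_mem_of_cutset`) the
measure `ν` is, at every scale, a convex combination of affine copies of itself of about that size.
At a scale equal to a large multiple of the wavelength `1 / |q|`, the map `g` is affine up to an error
negligible against the wavelength, so the oscillatory integral over each copy is a value of the
characteristic function of `ν` at a large frequency (`SelfSimilar.branch_small`).

*Almost every point of the image is absolutely normal.* For frequencies `q j` growing by a large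
factor at each step, `cos (2 π q j g + α)` has small mean on copies of size about `1 / q j` and is
nearly constant on copies of size about `1 / q (j + 1)`. These functions therefore satisfy the
exponential moment bound of independent, almost centred variables
(`SelfSimilar.integral_exp_sum_le`), and Chernoff's inequality with the Borel-Cantelli lemma bounds
their sums almost surely. Splitting `h * p ^ k` into residue classes of `k` gives the decay of the Weyl
sums, and Weyl's criterion (`pNormal_of_weyl`) concludes.
-/

open MeasureTheory Filter Set
open scoped ENNReal Topology

noncomputable section

/-- The Fourier transform of a Borel measure on `ℝ` at frequency `q`. -/
def fourierTransform (ν : Measure ℝ) (q : ℝ) : ℂ :=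
  ∫ x, Complex.exp (((2 * Real.pi * q * x : ℝ) : ℂ) * Complex.I) ∂ν

/-- `ν` is a Rajchman measure: its Fourier transform vanishes at infinity. -/
def Rajchman (ν : Measure ℝ) : Prop :=
  Tendsto (fun q : ℝ => fourierTransform ν q) (cocompact ℝ) (nhds 0)

/-- `x` is normal to base `p`: the orbit of `x` under multiplication by `p`, taken mod 1,
equidistributes for the Haar (Lebesgue) measure on the circle `ℝ/ℤ`. -/
def PNormal (p : ℕ) (x : ℝ) : Prop :=
  ∀ g : C(UnitAddCircle, ℝ),
    Tendsto (fun N : ℕ => (N : ℝ)⁻¹ * ∑ k ∈ Finset.Icc 1 N, g (((p : ℝ) ^ k * x : ℝ)))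
      atTop (nhds (∫ z, g z))

/-- `x` is absolutely normal: normal to every integer base `p ≥ 2`. -/
def AbsolutelyNormal (x : ℝ) : Prop := ∀ p : ℕ, 2 ≤ p → PNormal p x

/-- A measure is pointwise absolutely normal if almost every point is absolutely normal. -/
def PointwiseAbsolutelyNormal (ν : Measure ℝ) : Prop :=
  ∀ᵐ x ∂ν, AbsolutelyNormal x

/-! ### Non-lattice renewal equations -/

/-- The averaging operator `h ↦ ∑ i, p i * h (· - ℓ i)` of the random walk with steps `-ℓ i`. -/
def avgOp {ι : Type*} [Fintype ι] (p ℓ : ι → ℝ) (h : ℝ → ℝ) (u : ℝ) : ℝ :=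
  ∑ i, p i * h (u - ℓ i)

lemma exists_sub_of_mem_closure {s : Set ℝ} {x : ℝ} (hx : x ∈ AddSubgroup.closure s) :
    ∃ y ∈ AddSubmonoid.closure s, ∃ z ∈ AddSubmonoid.closure s, x = y - z := by
  induction hx using AddSubgroup.closure_induction with
  | mem x hx => exact ⟨x, AddSubmonoid.subset_closure hx, 0, zero_mem _, by simp⟩
  | zero => exact ⟨0, zero_mem _, 0, zero_mem _, by simp⟩
  | add x y _ _ h1 h2 =>
    obtain ⟨a, ha, b, hb, rfl⟩ := h1
    obtain ⟨c, hc, d, hd, rfl⟩ := h2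
    exact ⟨a + c, add_mem ha hc, b + d, add_mem hb hd, by ring⟩
  | neg x _ h1 =>
    obtain ⟨a, ha, b, hb, rfl⟩ := h1
    exact ⟨b, hb, a, ha, by ring⟩

/-- A non-lattice additive semigroup is eventually `δ`-dense: some finite part of it is a `δ`-net of
an interval of any prescribed length. If `0 < s - z < δ` with `s`, `z` in the semigroup, the points
`j s + (N - j) z` for `j ≤ N` form an arithmetic progression with step `s - z`. -/
lemma exists_finite_net {ι : Type*} (ℓ : ι → ℝ)
    (hnl : ¬ ∃ c : ℝ, ∀ i, ∃ m : ℤ, ℓ i = c * m) {δ : ℝ} (hδ : 0 < δ) (L : ℝ) :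
    ∃ X : ℝ, ∃ F : Finset ℝ, (∀ t ∈ F, t ∈ AddSubmonoid.closure (range ℓ)) ∧
      ∀ v ∈ Icc X (X + L), ∃ t ∈ F, |v - t| ≤ δ := by
  rcases AddSubgroup.dense_or_cyclic (AddSubgroup.closure (range ℓ)) with hd | ⟨c, hc⟩
  · obtain ⟨x, hx, hx0, hxδ⟩ := hd.exists_between hδ
    obtain ⟨s, hs, z, hz, rfl⟩ := exists_sub_of_mem_closure hx
    obtain ⟨N, hN⟩ := exists_nat_ge (L / (s - z))
    refine ⟨N * z, (Finset.range (N + 1)).image (fun j : ℕ => (N : ℝ) * z + j * (s - z)), ?_, ?_⟩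
    · intro t ht
      obtain ⟨j, hj, rfl⟩ := Finset.mem_image.1 ht
      have hjN : j ≤ N := by simpa [Nat.lt_succ_iff] using hj
      have : (N : ℝ) * z + j * (s - z) = (N - j : ℕ) • z + j • s := by
        simp only [nsmul_eq_mul, Nat.cast_sub hjN]; ring
      rw [this]
      exact add_mem (nsmul_mem hz _) (nsmul_mem hs _)
    · rintro v ⟨hv1, hv2⟩
      have hv3 : 0 ≤ (v - N * z) / (s - z) := div_nonneg (by linarith) hx0.le
      have hfl := Nat.floor_le hv3
      have hfl2 := Nat.lt_floor_add_one ((v - N * z) / (s - z))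
      refine ⟨_, Finset.mem_image.2 ⟨⌊(v - N * z) / (s - z)⌋₊, ?_, rfl⟩, ?_⟩
      · rw [Finset.mem_range, Nat.lt_succ_iff]
        refine Nat.floor_le_of_le ((div_le_div_of_nonneg_right ?_ hx0.le).trans hN)
        linarith
      · rw [le_div_iff₀ hx0] at hfl
        rw [div_lt_iff₀ hx0] at hfl2
        rw [abs_of_nonneg (by linarith)]
        nlinarith
  · refine (hnl ⟨c, fun i => ?_⟩).elim
    have : ℓ i ∈ AddSubgroup.closure (range ℓ) := AddSubgroup.subset_closure ⟨i, rfl⟩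
    rw [hc, AddSubgroup.mem_closure_singleton] at this
    obtain ⟨m, hm⟩ := this
    exact ⟨m, by rw [← hm, zsmul_eq_mul]; ring⟩

section Renewal

variable {ι : Type*} [Fintype ι] {p ℓ : ι → ℝ} {lm lM : ℝ}

/-- A continuous solution of the renewal equation `h = avgOp p ℓ h` is uniformly continuous:
its modulus of continuity on a compact window propagates to infinity. -/
lemma uniform_of_renewal (hp : ∀ i, 0 < p i) (hp1 : ∑ i, p i = 1) (hlm : 0 < lm)
    (hℓ : ∀ i, lm ≤ ℓ i) (hℓM : ∀ i, ℓ i ≤ lM)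
    {h : ℝ → ℝ} (hc : Continuous h) {u₁ : ℝ} (hrec : ∀ u, u₁ ≤ u → h u = avgOp p ℓ h u)
    {η : ℝ} (hη : 0 < η) :
    ∃ δ > 0, ∀ u v, u₁ ≤ u → u₁ ≤ v → |u - v| ≤ δ → |h u - h v| ≤ η := by
  have huc := (isCompact_Icc (a := u₁ - lM) (b := u₁ + 1)).uniformContinuousOn_of_continuous
    hc.continuousOn
  rw [Metric.uniformContinuousOn_iff] at huc
  obtain ⟨δ, hδ, hδ'⟩ := huc η hη
  refine ⟨min (δ / 2) 1, by positivity, ?_⟩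
  have key : ∀ k : ℕ, ∀ u v, u₁ - lM ≤ u → u₁ - lM ≤ v → u ≤ u₁ + 1 + k * lm →
      v ≤ u₁ + 1 + k * lm → |u - v| ≤ min (δ / 2) 1 → |h u - h v| ≤ η := by
    intro k
    induction k with
    | zero =>
      intro u v hu hv hu' hv' huv
      refine (hδ' u ⟨hu, by simpa using hu'⟩ v ⟨hv, by simpa using hv'⟩ ?_).le
      rw [Real.dist_eq]
      linarith [min_le_left (δ / 2) 1]
    | succ k ih =>
      intro u v hu hv hu' hv' huv
      push_cast at hu' hv'
      have h1 : |u - v| ≤ 1 := huv.trans (min_le_right _ _)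
      rw [abs_le] at h1
      by_cases hcase : u₁ ≤ u ∧ u₁ ≤ v
      · rw [hrec u hcase.1, hrec v hcase.2, avgOp, avgOp, ← Finset.sum_sub_distrib]
        calc |∑ i, (p i * h (u - ℓ i) - p i * h (v - ℓ i))|
            ≤ ∑ i, |p i * h (u - ℓ i) - p i * h (v - ℓ i)| := Finset.abs_sum_le_sum_abs _ _
          _ ≤ ∑ i, p i * η := by
            refine Finset.sum_le_sum fun i _ => ?_
            rw [← mul_sub, abs_mul, abs_of_pos (hp i)]
            refine mul_le_mul_of_nonneg_left ?_ (hp i).le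
            refine ih _ _ ?_ ?_ ?_ ?_ ?_
            · linarith [hℓM i]
            · linarith [hℓM i]
            · linarith [hℓ i]
            · linarith [hℓ i]
            · simpa using huv
          _ = η := by rw [← Finset.sum_mul, hp1, one_mul]
      · have hk : (0 : ℝ) ≤ k * lm := by positivity
        refine ih u v hu hv ?_ ?_ huv
        · by_contra hcon
          exact hcase ⟨by linarith, by linarith⟩
        · by_contra hcon
          exact hcase ⟨by linarith, by linarith⟩
  intro u v hu hv huv
  obtain ⟨k, hk⟩ := exists_nat_ge ((max u v - u₁ - 1) / lm)
  rw [div_le_iff₀ hlm] at hk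
  have hM : 0 ≤ lM := by
    rcases isEmpty_or_nonempty ι with hι | ⟨⟨i⟩⟩
    · simp at hp1
    · linarith [hℓ i, hℓM i]
  exact key k u v (by linarith) (by linarith) (by linarith [le_max_left u v])
    (by linarith [le_max_right u v]) huv

/-- The quantity `∑ i, p i ∫_{u - ℓ i}^u h` is conserved along solutions of the renewal equation. -/
lemma renewal_conserved (hp1 : ∑ i, p i = 1) {h : ℝ → ℝ} (hc : Continuous h) {u₁ : ℝ}
    (hrec : ∀ u, u₁ ≤ u → h u = avgOp p ℓ h u) {u : ℝ} (hu : u₁ ≤ u) :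
    ∑ i, p i * ∫ x in (u - ℓ i)..u, h x = ∑ i, p i * ∫ x in (u₁ - ℓ i)..u₁, h x := by
  have hd : ∀ x, HasDerivAt (fun u => ∑ i, p i * ∫ x in (u - ℓ i)..u, h x)
      (∑ i, p i * (h x - h (x - ℓ i))) x := by
    intro x
    refine HasDerivAt.fun_sum fun i _ => HasDerivAt.const_mul _ ?_
    have e : (fun u => ∫ x in (u - ℓ i)..u, h x) =
        fun u => (∫ x in (0 : ℝ)..u, h x) - ∫ x in (0 : ℝ)..(u - ℓ i), h x := by
      funext u
      rw [intervalIntegral.integral_interval_sub_left] <;> exact hc.intervalIntegrable _ _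
    rw [e]
    have hint : ∀ y, HasDerivAt (fun u => ∫ x in (0 : ℝ)..u, h x) (h y) y := fun y =>
      intervalIntegral.integral_hasDerivAt_right (hc.intervalIntegrable _ _)
        hc.stronglyMeasurable.stronglyMeasurableAtFilter hc.continuousAt
    have h2 := (hint (x - ℓ i)).comp x ((hasDerivAt_id x).sub_const (ℓ i))
    have h3 := (hint x).sub h2
    rw [mul_one] at h3
    exact h3
  refine constant_of_has_deriv_right_zero (a := u₁) (b := u)
    (f := fun u => ∑ i, p i * ∫ x in (u - ℓ i)..u, h x)
    (fun x _ => (hd x).continuousAt.continuousWithinAt) (fun x hx => ?_) u ⟨hu, le_rfl⟩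
  have := (hd x).hasDerivWithinAt (s := Ici x)
  convert this using 1
  simp only [mul_sub, Finset.sum_sub_distrib]
  rw [← Finset.sum_mul, hp1, one_mul, hrec x hx.1, avgOp, sub_self]

/-- Asymptotic upper bound for solutions of the renewal equation, by a Choquet-Deny argument:
where `h` is close to its upper limit `c`, it is also close to `c` on a long window, because of the
renewal equation, the density of the semigroup generated by the `ℓ i`, and uniform continuity.
Comparing with the conserved integral bounds `c`. -/
lemma renewal_eventually_lt (hp : ∀ i, 0 < p i) (hp1 : ∑ i, p i = 1) (hlm : 0 < lm)
    (hℓ : ∀ i, lm ≤ ℓ i) (hℓM : ∀ i, ℓ i ≤ lM)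
    (hnl : ¬ ∃ c : ℝ, ∀ i, ∃ m : ℤ, ℓ i = c * m)
    {h : ℝ → ℝ} (hc : Continuous h) (h0 : ∀ u, 0 ≤ h u) (h1 : ∀ u, h u ≤ 1)
    {u₁ : ℝ} (hrec : ∀ u, u₁ ≤ u → h u = avgOp p ℓ h u) {κ : ℝ}
    (hI : ∑ i, p i * ∫ x in (u₁ - ℓ i)..u₁, h x ≤ κ * ∑ i, p i * ℓ i) {c' : ℝ} (hκ : κ < c') :
    ∀ᶠ u in atTop, h u < c' := by
  classical
  have hne : Nonempty ι := by
    by_contra hι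
    rw [not_nonempty_iff] at hι
    simp at hp1
  have hL : 0 < ∑ i, p i * ℓ i :=
    Finset.sum_pos (fun i _ => mul_pos (hp i) (hlm.trans_le (hℓ i))) Finset.univ_nonempty
  have hbdd : IsBoundedUnder (· ≤ ·) atTop h := isBoundedUnder_of ⟨1, h1⟩
  have hbdd' : IsCoboundedUnder (· ≤ ·) atTop h :=
    (isBoundedUnder_of ⟨0, h0⟩ : IsBoundedUnder (· ≥ ·) atTop h).isCoboundedUnder_le
  set c := limsup h atTop with hcdef
  have hup : ∀ δ > 0, ∀ᶠ u in atTop, h u < c + δ := fun δ hδ =>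
    eventually_lt_of_limsup_lt (by linarith) hbdd
  suffices hcκ : c ≤ κ from eventually_lt_of_limsup_lt (by linarith) hbdd
  -- a filter along which `h` converges to its upper limit
  let F : Filter ℝ := atTop ⊓ comap h (𝓝 c)
  have hFtop : F ≤ atTop := inf_le_left
  have hFc : Tendsto h F (𝓝 c) := tendsto_comap.mono_left inf_le_right
  have hFne : F.NeBot := by
    rw [inf_neBot_iff_frequently_left]
    intro q hq hcon
    rw [eventually_comap] at hcon
    rw [Metric.eventually_nhds_iff] at hcon
    obtain ⟨δ, hδ, hcon⟩ := hcon
    have hfr := frequently_lt_of_lt_limsup hbdd' (b := c - δ) (by linarith)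
    obtain ⟨u, ⟨hu1, hu2⟩, hu3⟩ := ((hfr.and_eventually (hup δ hδ)).and_eventually hq).exists
    refine hcon (y := h u) ?_ u rfl hu3
    rw [Real.dist_eq, abs_lt]
    constructor <;> linarith
  have hshift : ∀ s : ℝ, Tendsto (fun u => u - s) F atTop := fun s =>
    (tendsto_atTop_add_const_right atTop (-s) tendsto_id).mono_left hFtop
  have hstep : ∀ s, Tendsto (fun u => h (u - s)) F (𝓝 c) → ∀ j,
      Tendsto (fun u => h (u - (s + ℓ j))) F (𝓝 c) := by
    intro s hs j
    rw [Metric.tendsto_nhds]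
    intro ε hε
    have hpj := hp j
    have hpj1 : p j ≤ 1 := by
      rw [← hp1]
      exact Finset.single_le_sum (fun i _ => (hp i).le) (Finset.mem_univ j)
    have hδ : 0 < ε * p j / 2 := by positivity
    have e1 := (Metric.tendsto_nhds.1 hs) _ hδ
    have e2 : ∀ᶠ u in F, ∀ i, h (u - (s + ℓ i)) < c + ε * p j / 2 := by
      rw [eventually_all]
      exact fun i => (hshift _).eventually (hup _ hδ)
    have e3 : ∀ᶠ u in F, u₁ ≤ u - s := (hshift s).eventually (eventually_ge_atTop u₁)
    filter_upwards [e1, e2, e3] with u g1 g2 g3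
    rw [Real.dist_eq, abs_lt] at g1 ⊢
    have hre := hrec _ g3
    rw [avgOp, ← Finset.add_sum_erase _ _ (Finset.mem_univ j)] at hre
    have hsum : ∑ i ∈ Finset.univ.erase j, p i * h (u - s - ℓ i) ≤
        (1 - p j) * (c + ε * p j / 2) := by
      have hp1' : ∑ i ∈ Finset.univ.erase j, p i = 1 - p j := by
        rw [← hp1, ← Finset.add_sum_erase _ _ (Finset.mem_univ j)]; ring
      rw [← hp1', Finset.sum_mul]
      refine Finset.sum_le_sum fun i _ => mul_le_mul_of_nonneg_left ?_ (hp i).le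
      rw [sub_sub]
      exact (g2 i).le
    have hj := g2 j
    rw [sub_sub] at hre
    refine ⟨?_, by nlinarith⟩
    by_contra hcon
    push Not at hcon
    have : p j * h (u - (s + ℓ j)) ≤ p j * (c - ε) :=
      mul_le_mul_of_nonneg_left (by linarith) hpj.le
    nlinarith [mul_pos hε hpj]
  have hsemi : ∀ s ∈ AddSubmonoid.closure (range ℓ), ∀ s₀,
      Tendsto (fun u => h (u - s₀)) F (𝓝 c) → Tendsto (fun u => h (u - (s₀ + s))) F (𝓝 c) := by
    intro s hs
    induction hs using AddSubmonoid.closure_induction with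
    | mem x hx =>
      obtain ⟨j, rfl⟩ := hx
      exact fun s₀ hs₀ => hstep s₀ hs₀ j
    | zero => intro s₀ hs₀; simpa using hs₀
    | add x y _ _ hx hy =>
      intro s₀ hs₀
      have := hy _ (hx s₀ hs₀)
      simpa [add_assoc] using this
  refine le_of_forall_pos_le_add fun η hη => ?_
  obtain ⟨δ, hδ, hδ'⟩ := uniform_of_renewal hp hp1 hlm hℓ hℓM hc hrec (half_pos hη)
  obtain ⟨X, S, hS, hnet⟩ := exists_finite_net ℓ hnl hδ lM
  have e1 : ∀ᶠ u in F, ∀ t ∈ S, c - η / 2 ≤ h (u - t) := by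
    rw [Filter.eventually_all_finset]
    intro t ht
    have := hsemi t (hS t ht) 0 (by simpa using hFc)
    rw [zero_add] at this
    filter_upwards [this.eventually (lt_mem_nhds (show c - η / 2 < c by linarith))] with u hu
    exact hu.le
  have e2 : ∀ᶠ u in F, ∀ t ∈ S, u₁ ≤ u - t := by
    rw [Filter.eventually_all_finset]
    exact fun t _ => (hshift t).eventually (eventually_ge_atTop u₁)
  have e3 : ∀ᶠ u in F, u₁ + lM ≤ u - X := (hshift X).eventually (eventually_ge_atTop _)
  obtain ⟨u, hu1, hu2, hu3⟩ := (e1.and (e2.and e3)).exists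
  have hlow : ∀ v, u - X - lM ≤ v → v ≤ u - X → c - η ≤ h v := by
    intro v hv1 hv2
    obtain ⟨t, ht, hvt⟩ := hnet (u - v) ⟨by linarith, by linarith⟩
    have := hδ' (u - t) v (hu2 t ht) (by linarith)
      (by rw [show u - t - v = u - v - t by ring]; exact hvt)
    have h3 := hu1 t ht
    rw [abs_le] at this
    linarith
  have hM : 0 ≤ lM := by obtain ⟨i⟩ := hne; linarith [hℓ i, hℓM i]
  have hcons := renewal_conserved hp1 hc hrec (u := u - X) (by linarith)
  have hge : (c - η) * ∑ i, p i * ℓ i ≤ ∑ i, p i * ∫ x in (u - X - ℓ i)..(u - X), h x := by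
    rw [Finset.mul_sum]
    refine Finset.sum_le_sum fun i _ => ?_
    have hli := hℓ i
    have hMi := hℓM i
    have : ∫ x in (u - X - ℓ i)..(u - X), (c - η) ≤ ∫ x in (u - X - ℓ i)..(u - X), h x := by
      refine intervalIntegral.integral_mono_on (by linarith) (by simp)
        (hc.intervalIntegrable _ _) fun x hx => hlow x (by linarith [hx.1]) hx.2
    rw [intervalIntegral.integral_const, smul_eq_mul] at this
    nlinarith [mul_le_mul_of_nonneg_left this (hp i).le]
  have : (c - η) * ∑ i, p i * ℓ i ≤ κ * ∑ i, p i * ℓ i := hge.trans (hcons.le.trans hI)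
  linarith [le_of_mul_le_mul_right this hL]

/-- Iterates of the obstacle problem: start from `ψ`, keep `ψ` where `χ = 1` and apply the averaging
operator where `χ = 0`. -/
def obstacleIter (p ℓ : ι → ℝ) (ψ χ : ℝ → ℝ) : ℕ → ℝ → ℝ
  | 0 => ψ
  | k + 1 => fun u => χ u * ψ u + (1 - χ u) * avgOp p ℓ (obstacleIter p ℓ ψ χ k) u

lemma avgOp_mono (hp : ∀ i, 0 < p i) {h₁ h₂ : ℝ → ℝ} (h : ∀ u, h₁ u ≤ h₂ u) (u : ℝ) :
    avgOp p ℓ h₁ u ≤ avgOp p ℓ h₂ u :=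
  Finset.sum_le_sum fun i _ => mul_le_mul_of_nonneg_left (h _) (hp i).le

lemma avgOp_const (hp1 : ∑ i, p i = 1) (c u : ℝ) : avgOp p ℓ (fun _ => c) u = c := by
  simp [avgOp, ← Finset.sum_mul, hp1]

lemma continuous_avgOp {h : ℝ → ℝ} (hc : Continuous h) : Continuous (avgOp p ℓ h) := by
  unfold avgOp
  fun_prop

/-- A bounded continuous subsolution `ψ ≤ avgOp p ℓ ψ` of a non-lattice renewal equation whose
averages over windows of fixed length tend to `0` tends to `0` itself. The subsolution is dominated
by the solution `h` of the renewal equation on `[u₁, ∞)` that starts from `ψ` below `u₁` (with a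
continuous transition), and `h` is asymptotically bounded by its conserved integral, which is
comparable to the integral of `ψ` over a window ending at `u₁`. -/
lemma tendsto_zero_of_subsolution (hp : ∀ i, 0 < p i) (hp1 : ∑ i, p i = 1) (hlm : 0 < lm)
    (hℓ : ∀ i, lm ≤ ℓ i) (hℓM : ∀ i, ℓ i ≤ lM)
    (hnl : ¬ ∃ c : ℝ, ∀ i, ∃ m : ℤ, ℓ i = c * m)
    {ψ : ℝ → ℝ} (hc : Continuous ψ) (h0 : ∀ u, 0 ≤ ψ u) (h1 : ∀ u, ψ u ≤ 1)
    (hsub : ∀ u, ψ u ≤ avgOp p ℓ ψ u)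
    (hW : ∀ L : ℝ, 0 ≤ L → Tendsto (fun u => ∫ x in (u - L)..u, ψ x) atTop (𝓝 0)) :
    Tendsto ψ atTop (𝓝 0) := by
  have hne : Nonempty ι := by
    by_contra hι
    rw [not_nonempty_iff] at hι
    simp at hp1
  have hM : 0 ≤ lM := by obtain ⟨i⟩ := hne; linarith [hℓ i, hℓM i]
  have hL : 0 < ∑ i, p i * ℓ i :=
    Finset.sum_pos (fun i _ => mul_pos (hp i) (hlm.trans_le (hℓ i))) Finset.univ_nonempty
  rw [tendsto_order]
  refine ⟨fun b hb => Eventually.of_forall fun u => hb.trans_le (h0 u), fun c' hc' => ?_⟩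
  obtain ⟨u₁, hu₁⟩ := ((hW (2 * lM) (by linarith)).eventually (gt_mem_nhds
    (show (0 : ℝ) < c' / 4 * ∑ i, p i * ℓ i by positivity))).exists
  set u₀ := u₁ - lm with hu₀
  set χ : ℝ → ℝ := fun u => max 0 (min 1 ((u₁ - u) / lm)) with hχ
  have hχc : Continuous χ := by fun_prop
  have hχ0 : ∀ u, 0 ≤ χ u := fun u => le_max_left _ _
  have hχ1 : ∀ u, χ u ≤ 1 := fun u => max_le zero_le_one (min_le_left _ _)
  have hχl : ∀ u, u ≤ u₀ → χ u = 1 := by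
    intro u hu
    have : 1 ≤ (u₁ - u) / lm := by rw [le_div_iff₀ hlm]; linarith
    simp [hχ, min_eq_left this]
  have hχr : ∀ u, u₁ ≤ u → χ u = 0 := by
    intro u hu
    have : (u₁ - u) / lm ≤ 0 := div_nonpos_of_nonpos_of_nonneg (by linarith) hlm.le
    exact max_eq_left ((min_le_right _ _).trans this)
  set H := obstacleIter p ℓ ψ χ with hH
  have hHs : ∀ k u, H (k + 1) u = χ u * ψ u + (1 - χ u) * avgOp p ℓ (H k) u := fun k u => rfl
  have hHc : ∀ k, Continuous (H k) := by
    intro k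
    induction k with
    | zero => exact hc
    | succ k ih =>
      have := continuous_avgOp (p := p) (ℓ := ℓ) ih
      have e : H (k + 1) = fun u => χ u * ψ u + (1 - χ u) * avgOp p ℓ (H k) u := rfl
      rw [e]
      fun_prop
  have hH1 : ∀ k u, H k u ≤ 1 := by
    intro k
    induction k with
    | zero => exact h1
    | succ k ih =>
      intro u
      have h3 := avgOp_mono (ℓ := ℓ) hp ih u
      rw [avgOp_const hp1] at h3
      rw [hHs]
      nlinarith [h1 u, hχ0 u, hχ1 u, mul_le_mul_of_nonneg_left (h1 u) (hχ0 u),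
        mul_le_mul_of_nonneg_left h3 (sub_nonneg.2 (hχ1 u))]
  have hHψ : ∀ k u, ψ u ≤ H k u := by
    intro k
    induction k with
    | zero => exact fun u => le_rfl
    | succ k ih =>
      intro u
      have h3 := (hsub u).trans (avgOp_mono (ℓ := ℓ) hp ih u)
      rw [hHs]
      nlinarith [mul_le_mul_of_nonneg_left h3 (sub_nonneg.2 (hχ1 u))]
  have hstab : ∀ k : ℕ, ∀ u, u ≤ u₀ + k * lm → H (k + 1) u = H k u := by
    intro k
    induction k with
    | zero =>
      intro u hu
      rw [hHs, hχl u (by simpa using hu)]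
      simp [hH, obstacleIter]
    | succ k ih =>
      intro u hu
      rw [hHs, hHs]
      congr 2
      refine Finset.sum_congr rfl fun i _ => ?_
      rw [ih]
      push_cast at hu
      linarith [hℓ i]
  have hstab' : ∀ k j : ℕ, ∀ u, u ≤ u₀ + k * lm → H (k + j) u = H k u := by
    intro k j u hu
    induction j with
    | zero => rfl
    | succ j ih =>
      rw [← ih, ← add_assoc]
      refine hstab _ _ (hu.trans ?_)
      push_cast
      nlinarith [Nat.cast_nonneg (α := ℝ) j]
  set h : ℝ → ℝ := fun u => H ⌈(u - u₀) / lm⌉₊ u with hh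
  have heq : ∀ k : ℕ, ∀ u, u ≤ u₀ + k * lm → h u = H k u := by
    intro k u hu
    have hK : ⌈(u - u₀) / lm⌉₊ ≤ k := by
      rw [Nat.ceil_le, div_le_iff₀ hlm]; linarith
    have hK2 := Nat.le_ceil ((u - u₀) / lm)
    rw [div_le_iff₀ hlm] at hK2
    obtain ⟨j, hj⟩ := Nat.exists_eq_add_of_le hK
    rw [hh]
    simp only
    rw [hj, hstab' _ _ _ (by linarith)]
  have hex : ∀ u, ∃ k : ℕ, u < u₀ + k * lm := by
    intro u
    obtain ⟨k, hk⟩ := exists_nat_gt ((u - u₀) / lm)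
    rw [div_lt_iff₀ hlm] at hk
    exact ⟨k, by linarith⟩
  have hhc : Continuous h := by
    rw [continuous_iff_continuousAt]
    intro u
    obtain ⟨k, hk⟩ := hex u
    refine (hHc k).continuousAt.congr ?_
    filter_upwards [gt_mem_nhds hk] with v hv
    exact (heq k v hv.le).symm
  have hrec : ∀ u, u₁ ≤ u → h u = avgOp p ℓ h u := by
    intro u hu
    obtain ⟨k, hk⟩ := hex u
    rw [heq k u hk.le, ← hstab k u hk.le, hHs, hχr u hu]
    simp only [zero_mul, sub_zero, one_mul, zero_add]
    refine Finset.sum_congr rfl fun i _ => ?_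
    rw [heq k]
    linarith [hℓ i]
  have hh0 : ∀ u, 0 ≤ h u := fun u => (h0 u).trans (hHψ _ u)
  have hhle : ∀ u, u ≤ u₁ → h u ≤ ψ u + avgOp p ℓ ψ u := by
    intro u hu
    rw [heq 1 u (by simp [hu₀]; linarith), hHs]
    have hP : 0 ≤ avgOp p ℓ ψ u := (h0 u).trans (hsub u)
    change χ u * ψ u + (1 - χ u) * avgOp p ℓ ψ u ≤ _
    nlinarith [mul_le_mul_of_nonneg_right (hχ1 u) (h0 u), mul_nonneg (hχ0 u) hP]
  have hψint : ∀ a b, IntervalIntegrable ψ volume a b := fun a b => hc.intervalIntegrable a b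
  have hwin : ∀ a b, u₁ - 2 * lM ≤ a → a ≤ b → b ≤ u₁ →
      ∫ x in a..b, ψ x ≤ ∫ x in (u₁ - 2 * lM)..u₁, ψ x := by
    intro a b ha hab hb
    exact intervalIntegral.integral_mono_interval ha hab hb (Eventually.of_forall h0) (hψint _ _)
  have hI : ∑ i, p i * ∫ x in (u₁ - ℓ i)..u₁, h x ≤ c' / 2 * ∑ i, p i * ℓ i := by
    have hone : ∀ i, ∫ x in (u₁ - ℓ i)..u₁, h x ≤ 2 * ∫ x in (u₁ - 2 * lM)..u₁, ψ x := by
      intro i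
      have hli := hℓ i
      have hMi := hℓM i
      have hPc : Continuous (avgOp p ℓ ψ) := continuous_avgOp hc
      calc ∫ x in (u₁ - ℓ i)..u₁, h x ≤ ∫ x in (u₁ - ℓ i)..u₁, (ψ x + avgOp p ℓ ψ x) :=
            intervalIntegral.integral_mono_on (by linarith) (hhc.intervalIntegrable _ _)
              ((hc.add hPc).intervalIntegrable _ _) fun x hx => hhle x hx.2
        _ = (∫ x in (u₁ - ℓ i)..u₁, ψ x) + ∫ x in (u₁ - ℓ i)..u₁, avgOp p ℓ ψ x :=
            intervalIntegral.integral_add (hψint _ _) (hPc.intervalIntegrable _ _)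
        _ ≤ (∫ x in (u₁ - 2 * lM)..u₁, ψ x) + ∫ x in (u₁ - 2 * lM)..u₁, ψ x := by
            refine add_le_add (hwin _ _ (by linarith) (by linarith) le_rfl) ?_
            unfold avgOp
            rw [intervalIntegral.integral_finsetSum]
            · calc ∑ j, ∫ x in (u₁ - ℓ i)..u₁, p j * ψ (x - ℓ j)
                  ≤ ∑ j, p j * ∫ x in (u₁ - 2 * lM)..u₁, ψ x := by
                    refine Finset.sum_le_sum fun j _ => ?_
                    rw [intervalIntegral.integral_const_mul,
                      intervalIntegral.integral_comp_sub_right (fun x => ψ x)]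
                    refine mul_le_mul_of_nonneg_left ?_ (hp j).le
                    exact hwin _ _ (by linarith [hℓM j]) (by linarith) (by linarith [hℓ j])
                _ = _ := by rw [← Finset.sum_mul, hp1, one_mul]
            · intro j _
              exact (continuous_const.mul (hc.comp (continuous_id.sub continuous_const))
                ).intervalIntegrable _ _
        _ = _ := by ring
    calc ∑ i, p i * ∫ x in (u₁ - ℓ i)..u₁, h x
        ≤ ∑ i, p i * (2 * ∫ x in (u₁ - 2 * lM)..u₁, ψ x) :=
          Finset.sum_le_sum fun i _ => mul_le_mul_of_nonneg_left (hone i) (hp i).le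
      _ = 2 * ∫ x in (u₁ - 2 * lM)..u₁, ψ x := by rw [← Finset.sum_mul, hp1, one_mul]
      _ ≤ _ := by linarith
  filter_upwards [renewal_eventually_lt hp hp1 hlm hℓ hℓM hnl hhc hh0 (fun u => hH1 _ u) hrec hI
    (show c' / 2 < c' by linarith)] with u hu
  exact (hHψ _ u).trans_lt hu

end Renewal

/-! ### Self-similar measures -/

/-- `ν` is the self-similar probability measure of the maps `x ↦ r i * x + t i` with (real)
weights `P i`. -/
structure SelfSimilar {n : ℕ} (r t P : Fin n → ℝ) (ν : Measure ℝ) : Prop where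
  prob : IsProbabilityMeasure ν
  pos : ∀ i, 0 < P i
  sum : ∑ i, P i = 1
  r0 : ∀ i, 0 < |r i|
  r1 : ∀ i, |r i| < 1
  eq : ν = ∑ i, ENNReal.ofReal (P i) • ν.map (fun x => r i * x + t i)

namespace SelfSimilar

variable {n : ℕ} {r t P : Fin n → ℝ} {ν : Measure ℝ}

lemma measure_eq (S : SelfSimilar r t P ν) {s : Set ℝ} (hs : MeasurableSet s) :
    ν s = ∑ i, ENNReal.ofReal (P i) * ν ((fun x => r i * x + t i) ⁻¹' s) := by
  conv_lhs => rw [S.eq]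
  rw [Measure.finsetSum_apply]
  refine Finset.sum_congr rfl fun i _ => ?_
  rw [Measure.smul_apply, smul_eq_mul, Measure.map_apply (by fun_prop) hs]

lemma real_eq (S : SelfSimilar r t P ν) {s : Set ℝ} (hs : MeasurableSet s) :
    ν.real s = ∑ i, P i * ν.real ((fun x => r i * x + t i) ⁻¹' s) := by
  have := S.prob
  rw [measureReal_def, S.measure_eq hs, ENNReal.toReal_sum]
  · refine Finset.sum_congr rfl fun i _ => ?_
    rw [ENNReal.toReal_mul, ENNReal.toReal_ofReal (S.pos i).le, measureReal_def]
  · intro i _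
    exact ENNReal.mul_ne_top ENNReal.ofReal_ne_top (measure_ne_top _ _)

lemma integrable_of_bounded (S : SelfSimilar r t P ν) {E : Type*} [NormedAddCommGroup E]
    [SecondCountableTopology E] {F : ℝ → E}
    (hF : Continuous F) {C : ℝ} (hC : ∀ x, ‖F x‖ ≤ C) : Integrable F ν := by
  have := S.prob
  exact Integrable.of_bound hF.aestronglyMeasurable C (Eventually.of_forall hC)

lemma integral_eq (S : SelfSimilar r t P ν) {E : Type*} [NormedAddCommGroup E] [NormedSpace ℝ E]
    [SecondCountableTopology E] {F : ℝ → E}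
    (hF : Continuous F) {C : ℝ} (hC : ∀ x, ‖F x‖ ≤ C) :
    ∫ x, F x ∂ν = ∑ i, P i • ∫ x, F (r i * x + t i) ∂ν := by
  have := S.prob
  conv_lhs => rw [S.eq]
  rw [integral_finsetSum_measure]
  · refine Finset.sum_congr rfl fun i _ => ?_
    rw [integral_smul_measure, integral_map (by fun_prop) hF.aestronglyMeasurable,
      ENNReal.toReal_ofReal (S.pos i).le]
  · intro i _
    have hi : IsFiniteMeasure (ν.map (fun x => r i * x + t i)) := inferInstance
    exact (Integrable.of_bound hF.aestronglyMeasurable C (Eventually.of_forall hC)).smul_measure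
      ENNReal.ofReal_ne_top

lemma exists_rmin (S : SelfSimilar r t P ν) : ∃ ρ, 0 < ρ ∧ ρ < 1 ∧ ∀ i, ρ ≤ |r i| := by
  have hne : Nonempty (Fin n) := by
    by_contra hι
    rw [not_nonempty_iff] at hι
    simpa using S.sum
  obtain ⟨i, hi⟩ := Finite.exists_min (fun i => |r i|)
  exact ⟨|r i|, S.r0 i, S.r1 i, hi⟩

lemma exists_rmax (S : SelfSimilar r t P ν) : ∃ ρ, 0 < ρ ∧ ρ < 1 ∧ ∀ i, |r i| ≤ ρ := by
  have hne : Nonempty (Fin n) := by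
    by_contra hι
    rw [not_nonempty_iff] at hι
    simpa using S.sum
  obtain ⟨i, hi⟩ := Finite.exists_max (fun i => |r i|)
  exact ⟨|r i|, S.r0 i, S.r1 i, hi⟩

/-- The measure lives on every compact interval that the maps preserve: mass at distance `> s` from
the interval comes from mass at distance `> s / ρ ^ k` for all `k`, where `ρ < 1` bounds the
contraction ratios. -/
lemma ae_mem_Icc (S : SelfSimilar r t P ν) {a b : ℝ} (hab : a < b)
    (hmaps : ∀ i, MapsTo (fun x => r i * x + t i) (Icc a b) (Icc a b)) :
    ∀ᵐ x ∂ν, x ∈ Icc a b := by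
  have := S.prob
  obtain ⟨ρ, hρ0, hρ1, hρ⟩ := S.exists_rmax
  set U : ℝ → Set ℝ := fun s => {x | x < a - s ∨ b + s < x} with hU
  have hUm : ∀ s, MeasurableSet (U s) := fun s => measurableSet_Iio.union measurableSet_Ioi
  have hUanti : ∀ s s', s ≤ s' → U s' ⊆ U s := by
    intro s s' h x hx
    rcases hx with hx | hx
    · exact Or.inl (by linarith)
    · exact Or.inr (by linarith)
  have hstep : ∀ s, 0 < s → ν (U s) ≤ ν (U (s / ρ)) := by
    intro s hs
    rw [S.measure_eq (hUm s)]
    calc ∑ i, ENNReal.ofReal (P i) * ν ((fun x => r i * x + t i) ⁻¹' U s)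
        ≤ ∑ i, ENNReal.ofReal (P i) * ν (U (s / ρ)) := by
          refine Finset.sum_le_sum fun i _ => mul_le_mul_right (measure_mono ?_) _
          intro x hx
          by_contra hcon
          simp only [hU, mem_ofPred_eq, not_or, not_lt, mem_preimage] at hx hcon
          -- project to the interval
          set x' := max a (min b x) with hx'
          have hx'I : x' ∈ Icc a b := ⟨le_max_left _ _, max_le hab.le (min_le_left _ _)⟩
          have hd : |x - x'| ≤ s / ρ := by
            have hpos : 0 < s / ρ := by positivity
            rw [hx', abs_le]
            rcases le_total x a with h1 | h1
            · rw [min_eq_right (by linarith), max_eq_left h1]; constructor <;> linarith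
            · rcases le_total x b with h2 | h2
              · rw [min_eq_right h2, max_eq_right h1]; constructor <;> linarith
              · rw [min_eq_left h2, max_eq_right hab.le]; constructor <;> linarith
          have h3 := hmaps i hx'I
          have h4 : |(r i * x + t i) - (r i * x' + t i)| ≤ s := by
            rw [show (r i * x + t i) - (r i * x' + t i) = r i * (x - x') by ring, abs_mul]
            calc |r i| * |x - x'| ≤ ρ * (s / ρ) :=
                  mul_le_mul (hρ i) hd (abs_nonneg _) hρ0.le
              _ = s := by field_simp
          rw [abs_le] at h4
          rcases hx with hx | hx
          · linarith [h3.1]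
          · linarith [h3.2]
      _ = ν (U (s / ρ)) := by
          rw [← Finset.sum_mul, ← ENNReal.ofReal_sum_of_nonneg fun i _ => (S.pos i).le, S.sum]
          simp
  have hiter : ∀ s, 0 < s → ∀ k : ℕ, ν (U s) ≤ ν (U (s / ρ ^ k)) := by
    intro s hs k
    induction k with
    | zero => simp
    | succ k ih =>
      refine ih.trans ((hstep _ (by positivity)).trans_eq ?_)
      rw [div_div, pow_succ]
  have hlim : Tendsto (fun k : ℕ => ν (U k)) atTop (𝓝 0) := by
    have h1 := tendsto_measure_iInter_atTop (μ := ν) (s := fun k : ℕ => U k)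
      (fun k => (hUm _).nullMeasurableSet)
      (fun i j hij => hUanti _ _ (by exact_mod_cast hij)) ⟨0, measure_ne_top _ _⟩
    have h2 : ⋂ k : ℕ, U k = ∅ := by
      rw [eq_empty_iff_forall_notMem]
      intro x hx
      rw [mem_iInter] at hx
      obtain ⟨k, hk⟩ := exists_nat_gt (max (a - x) (x - b))
      rw [max_lt_iff] at hk
      rcases hx k with h | h
      · linarith [hk.1]
      · linarith [hk.2]
    rwa [h2, measure_empty] at h1
  have hzero : ∀ s, 0 < s → ν (U s) = 0 := by
    intro s hs
    refine le_antisymm (ge_of_tendsto' hlim fun k => ?_) zero_le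
    obtain ⟨m, hm⟩ := exists_nat_ge ((k : ℝ) / s)
    obtain ⟨j, hj⟩ := ((tendsto_pow_atTop_atTop_of_one_lt
      ((one_lt_inv₀ hρ0).2 hρ1)).eventually_ge_atTop ((k : ℝ) / s)).exists
    refine (hiter s hs j).trans (measure_mono (hUanti _ _ ?_))
    rw [div_le_iff₀ hs, inv_pow] at hj
    rw [div_eq_mul_inv]
    linarith
  have hall : ∀ᵐ x ∂ν, ∀ k : ℕ, x ∉ U (1 / ((k : ℝ) + 1)) := by
    rw [ae_all_iff]
    intro k
    exact measure_eq_zero_iff_ae_notMem.1 (hzero _ (by positivity))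
  filter_upwards [hall] with x hx
  constructor
  · by_contra hcon
    obtain ⟨k, hk⟩ := exists_nat_one_div_lt (sub_pos.2 (not_le.1 hcon))
    exact hx k (Or.inl (by linarith))
  · by_contra hcon
    obtain ⟨k, hk⟩ := exists_nat_one_div_lt (sub_pos.2 (not_le.1 hcon))
    exact hx k (Or.inr (by linarith))

/-- There are no atoms: the finite set of atoms of maximal mass is invariant under all the expanding
inverse maps, hence is contained in the fixed point of each of them. -/
lemma measure_singleton (S : SelfSimilar r t P ν)
    (hfix : ∃ i j : Fin n, ∃ y z : ℝ, r i * y + t i = y ∧ r j * z + t j = z ∧ y ≠ z) (x₀ : ℝ) :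
    ν {x₀} = 0 := by
  have := S.prob
  by_contra hx₀
  have hfin : ∀ c : ℝ≥0∞, 0 < c → {x : ℝ | c ≤ ν {x}}.Finite := fun c hc =>
    Measure.finite_const_le_meas_of_disjoint_iUnion ν hc (fun x => measurableSet_singleton x)
      (fun x y hxy => by simpa using hxy) (measure_ne_top _ _)
  obtain ⟨x₁, hx₁, hmax⟩ := Set.exists_max_image _ (fun x => ν {x})
    (hfin _ (pos_iff_ne_zero.2 hx₀)) ⟨x₀, le_refl (ν {x₀})⟩
  have hmax' : ∀ y, ν {y} ≤ ν {x₁} := by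
    intro y
    by_cases hy : ν {x₀} ≤ ν {y}
    · exact hmax y hy
    · exact (not_le.1 hy).le.trans hx₁
  have hmaxr : ∀ y, ν.real {y} ≤ ν.real {x₁} := fun y =>
    ENNReal.toReal_mono (measure_ne_top _ _) (hmax' y)
  set B := {x : ℝ | ν {x₁} ≤ ν {x}} with hB
  have hBfin : B.Finite := hfin _ ((pos_iff_ne_zero.2 hx₀).trans_le hx₁)
  have hpre : ∀ i x, (fun x => r i * x + t i) ⁻¹' {x} = {(x - t i) / r i} := by
    intro i x
    have hri : r i ≠ 0 := abs_pos.1 (S.r0 i)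
    ext y
    simp only [mem_preimage, mem_singleton_iff]
    rw [eq_div_iff hri]
    constructor <;> intro h <;> linarith
  have hinv : ∀ i, ∀ x ∈ B, (x - t i) / r i ∈ B := by
    intro i x hx
    have h1 : ν.real {x} = ν.real {x₁} :=
      le_antisymm (hmaxr x) (ENNReal.toReal_mono (measure_ne_top _ _) hx)
    have h2 := S.real_eq (measurableSet_singleton x)
    by_contra hcon
    have hcon' : ν.real {(x - t i) / r i} < ν.real {x₁} :=
      (ENNReal.toReal_lt_toReal (measure_ne_top _ _) (measure_ne_top _ _)).2 (not_le.1 hcon)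
    have h3 : ∑ j, P j * ν.real ((fun x => r j * x + t j) ⁻¹' {x}) < ∑ j, P j * ν.real {x₁} := by
      refine Finset.sum_lt_sum (fun j _ => ?_) ⟨i, Finset.mem_univ i, ?_⟩
      · rw [hpre]
        exact mul_le_mul_of_nonneg_left (hmaxr _) (S.pos j).le
      · rw [hpre]
        exact mul_lt_mul_of_pos_left hcon' (S.pos i)
    rw [← h2, ← Finset.sum_mul, S.sum, one_mul] at h3
    linarith
  have huniq : ∀ i y, r i * y + t i = y → x₁ = y := by
    intro i y hy
    obtain ⟨x, hx, hxm⟩ := Set.exists_max_image B (fun x => |x - y|) hBfin ⟨x₁, le_refl (ν {x₁})⟩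
    have h1 := hxm _ (hinv i x hx)
    have hri : r i ≠ 0 := abs_pos.1 (S.r0 i)
    have h2 : (x - t i) / r i - y = (x - y) / r i := by
      field_simp
      linarith
    simp only [h2, abs_div] at h1
    rw [div_le_iff₀ (S.r0 i)] at h1
    have h3 : |x - y| ≤ 0 := by
      by_contra hcon
      nlinarith [S.r1 i]
    have h4 := (hxm x₁ (le_refl (ν {x₁}))).trans h3
    exact sub_eq_zero.1 (abs_eq_zero.1 (le_antisymm h4 (abs_nonneg _)))
  obtain ⟨i, j, y, z, hy, hz, hyz⟩ := hfix
  exact hyz ((huniq i y hy).symm.trans (huniq j z hz))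

end SelfSimilar

/-! ### Decay of the characteristic function -/

/-- Wiener's lemma: the quadratic mean of the characteristic function of an atomless probability
measure tends to `0`, here along logarithmic windows of fixed length. -/
lemma tendsto_wiener (ν : Measure ℝ) [IsProbabilityMeasure ν] (hν : ∀ x, ν {x} = 0) {L : ℝ}
    (hL : 0 ≤ L) :
    Tendsto (fun u => ∫ x in (u - L)..u, ‖charFun ν (Real.exp x)‖ ^ 2) atTop (𝓝 0) := by
  -- the law of the difference of two independent samples
  set μ : Measure ℝ := (ν.prod ν).map (fun z => z.1 - z.2) with hμ
  have hsubm : Measurable (fun z : ℝ × ℝ => z.1 - z.2) := by fun_prop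
  have hμP : IsProbabilityMeasure μ := Measure.isProbabilityMeasure_map hsubm.aemeasurable
  have hchar : ∀ s, charFun μ s = ((‖charFun ν s‖ ^ 2 : ℝ) : ℂ) := by
    intro s
    have e : charFun μ s = charFun ν s * charFun ν (-s) := by
      rw [charFun_apply_real, charFun_apply_real, charFun_apply_real, hμ,
        integral_map hsubm.aemeasurable (by fun_prop), ← integral_prod_mul]
      refine integral_congr_ae (Eventually.of_forall fun z => ?_)
      simp only
      rw [← Complex.exp_add]
      push_cast
      ring_nf
    rw [e, charFun_neg, Complex.mul_conj, Complex.normSq_eq_norm_sq]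
  have hμ0 : μ {0} = 0 := by
    rw [hμ, Measure.map_apply hsubm (measurableSet_singleton 0),
      Measure.measure_prod_null (hsubm (measurableSet_singleton 0))]
    refine Eventually.of_forall fun x => ?_
    have : Prod.mk x ⁻¹' ((fun z : ℝ × ℝ => z.1 - z.2) ⁻¹' {0}) = {x} := by
      ext y
      simp only [mem_preimage, mem_singleton_iff, sub_eq_zero]
      exact eq_comm
    simp only [this, hν x, Pi.zero_apply]
  have hsinc : Tendsto (fun R : ℝ => ∫ x, Real.sinc (R * x) ∂μ) atTop (𝓝 0) := by
    have h0 : (0 : ℝ) = ∫ _, (0 : ℝ) ∂μ := by simp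
    rw [h0]
    refine tendsto_integral_filter_of_dominated_convergence (fun _ => 1)
      (Eventually.of_forall fun R => ?_) (Eventually.of_forall fun R => ?_)
      (integrable_const 1) ?_
    · exact (Real.continuous_sinc.comp (continuous_const.mul continuous_id)).aestronglyMeasurable
    · exact Eventually.of_forall fun x => Real.abs_sinc_le_one _
    · have : ∀ᵐ x ∂μ, x ∉ ({0} : Set ℝ) := measure_eq_zero_iff_ae_notMem.1 hμ0
      filter_upwards [this] with x hx
      have hx' : x ≠ 0 := hx
      have hb : Tendsto (fun R : ℝ => R⁻¹ * |x|⁻¹) atTop (𝓝 0) := by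
        simpa using tendsto_inv_atTop_zero.mul_const (|x|⁻¹)
      refine squeeze_zero_norm' ?_ hb
      filter_upwards [eventually_gt_atTop 0] with R hR
      rw [Real.sinc_of_ne_zero (mul_ne_zero hR.ne' hx'), Real.norm_eq_abs, abs_div, abs_mul,
        abs_of_pos hR, ← mul_inv, ← one_div]
      exact div_le_div_of_nonneg_right (Real.abs_sin_le_one _) (by positivity)
  have hcont : Continuous (fun s => ‖charFun ν s‖ ^ 2) := by
    have := continuous_charFun (μ := ν)
    fun_prop
  have hint : ∀ R : ℝ, 0 < R →
      ∫ s in (-R)..R, ‖charFun ν s‖ ^ 2 = 2 * R * ∫ x, Real.sinc (R * x) ∂μ := by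
    intro R hR
    have h1 := integral_charFun_Icc (μ := μ) hR
    simp only [hchar] at h1
    rw [intervalIntegral.integral_ofReal] at h1
    exact_mod_cast h1
  have hbound : ∀ u, ∫ x in (u - L)..u, ‖charFun ν (Real.exp x)‖ ^ 2 ≤
      2 * Real.exp L * ∫ x, Real.sinc (Real.exp u * x) ∂μ := by
    intro u
    have hcc : Continuous (fun x => ‖charFun ν (Real.exp x)‖ ^ 2) :=
      hcont.comp Real.continuous_exp
    calc ∫ x in (u - L)..u, ‖charFun ν (Real.exp x)‖ ^ 2
        ≤ ∫ x in (u - L)..u,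
          Real.exp (L - u) * (‖charFun ν (Real.exp x)‖ ^ 2 * Real.exp x) := by
          refine intervalIntegral.integral_mono_on (by linarith) (hcc.intervalIntegrable _ _)
            ((continuous_const.mul (hcc.mul Real.continuous_exp)).intervalIntegrable _ _) ?_
          intro x hx
          have h1 : 1 ≤ Real.exp (L - u) * Real.exp x := by
            rw [← Real.exp_add]
            exact Real.one_le_exp (by linarith [hx.1])
          nlinarith [sq_nonneg ‖charFun ν (Real.exp x)‖]
      _ = Real.exp (L - u) * ∫ s in (Real.exp (u - L))..(Real.exp u), ‖charFun ν s‖ ^ 2 := by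
          rw [intervalIntegral.integral_const_mul]
          congr 1
          exact intervalIntegral.integral_comp_mul_deriv (g := fun s => ‖charFun ν s‖ ^ 2)
            (fun x _ => Real.hasDerivAt_exp x) Real.continuous_exp.continuousOn hcont
      _ ≤ Real.exp (L - u) * ∫ s in (-Real.exp u)..(Real.exp u), ‖charFun ν s‖ ^ 2 := by
          refine mul_le_mul_of_nonneg_left ?_ (Real.exp_pos _).le
          refine intervalIntegral.integral_mono_interval ?_ ?_ le_rfl
            (Eventually.of_forall fun s => sq_nonneg _) (hcont.intervalIntegrable _ _)
          · linarith [Real.exp_pos u, Real.exp_pos (u - L)]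
          · exact Real.exp_le_exp.2 (by linarith)
      _ = _ := by
          rw [hint _ (Real.exp_pos u), Real.exp_sub]
          field_simp
  refine squeeze_zero (fun u => ?_) hbound ?_
  · exact intervalIntegral.integral_nonneg (by linarith) fun x _ => sq_nonneg _
  · simpa using (hsinc.comp Real.tendsto_exp_atTop).const_mul (2 * Real.exp L)

namespace SelfSimilar

variable {n : ℕ} {r t P : Fin n → ℝ} {ν : Measure ℝ}

lemma charFun_eq (S : SelfSimilar r t P ν) (s : ℝ) :
    charFun ν s = ∑ i, P i • (Complex.exp ((s * t i : ℝ) * Complex.I) * charFun ν (r i * s)) := by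
  rw [charFun_apply_real, S.integral_eq (C := 1) (by fun_prop) ?_]
  · refine Finset.sum_congr rfl fun i _ => ?_
    rw [charFun_apply_real, ← integral_const_mul]
    congr 2
    funext x
    rw [← Complex.exp_add]
    push_cast
    ring_nf
  · intro x
    rw [← Complex.ofReal_mul, Complex.norm_exp_ofReal_mul_I]

lemma norm_charFun_abs (ν : Measure ℝ) (s : ℝ) : ‖charFun ν |s|‖ = ‖charFun ν s‖ := by
  rcases abs_choice s with h | h
  · rw [h]
  · rw [h, charFun_neg, RCLike.norm_conj]

/-- Non-lattice self-similar measures are Rajchman: `u ↦ ‖charFun ν (exp u)‖ ^ 2` is a subsolution of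
the renewal equation with steps `-log |r i|`, by the self-similarity relation and convexity of the
square, and its averages over windows vanish at infinity by Wiener's lemma. -/
lemma charFun_small (S : SelfSimilar r t P ν)
    (hfix : ∃ i j : Fin n, ∃ y z : ℝ, r i * y + t i = y ∧ r j * z + t j = z ∧ y ≠ z)
    (haper : ¬ ∃ c : ℝ, ∀ i, ∃ m : ℤ, Real.log |r i| = c * m) {ε : ℝ} (hε : 0 < ε) :
    ∃ T > 0, ∀ s, T ≤ |s| → ‖charFun ν s‖ ≤ ε := by
  have := S.prob
  obtain ⟨ρ, hρ0, hρ1, hρ⟩ := S.exists_rmin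
  obtain ⟨ρ', hρ'0, hρ'1, hρ'⟩ := S.exists_rmax
  have hcont := continuous_charFun (μ := ν)
  have hle1 : ∀ s, ‖charFun ν s‖ ≤ 1 := fun s => by simpa using norm_charFun_le (μ := ν) s
  have hmain : Tendsto (fun u => ‖charFun ν (Real.exp u)‖ ^ 2) atTop (𝓝 0) := by
    refine tendsto_zero_of_subsolution (p := P) (ℓ := fun i => -Real.log |r i|)
      (lm := -Real.log ρ') (lM := -Real.log ρ) S.pos S.sum ?_ ?_ ?_ ?_ ?_ ?_ ?_ ?_ ?_
    · linarith [Real.log_neg hρ'0 hρ'1]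
    · exact fun i => neg_le_neg (Real.log_le_log (S.r0 i) (hρ' i))
    · exact fun i => neg_le_neg (Real.log_le_log hρ0 (hρ i))
    · rintro ⟨c, hc⟩
      refine haper ⟨-c, fun i => ?_⟩
      obtain ⟨m, hm⟩ := hc i
      exact ⟨m, by linarith⟩
    · fun_prop
    · exact fun u => sq_nonneg _
    · exact fun u => pow_le_one₀ (norm_nonneg _) (hle1 _)
    · intro u
      have h1 : ‖charFun ν (Real.exp u)‖ ≤ ∑ i, P i * ‖charFun ν (Real.exp (u - -Real.log |r i|))‖ := by
        rw [S.charFun_eq]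
        refine (norm_sum_le _ _).trans (Finset.sum_le_sum fun i _ => ?_)
        rw [norm_smul, norm_mul, Complex.norm_exp_ofReal_mul_I, one_mul, Real.norm_eq_abs,
          abs_of_pos (S.pos i), sub_neg_eq_add, Real.exp_add, Real.exp_log (S.r0 i),
          ← norm_charFun_abs ν (r i * Real.exp u), abs_mul, abs_of_pos (Real.exp_pos u),
          mul_comm |r i|]
      calc ‖charFun ν (Real.exp u)‖ ^ 2
          ≤ (∑ i, P i * ‖charFun ν (Real.exp (u - -Real.log |r i|))‖) ^ 2 :=
            pow_le_pow_left₀ (norm_nonneg _) h1 2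
        _ ≤ _ := Real.pow_arith_mean_le_arith_mean_pow _ _ _ (fun i _ => (S.pos i).le) S.sum
            (fun i _ => norm_nonneg _) 2
    · exact fun L hL => tendsto_wiener ν (S.measure_singleton hfix) hL
  obtain ⟨u₀, hu₀⟩ := eventually_atTop.1 (hmain.eventually (gt_mem_nhds (show 0 < ε ^ 2 by positivity)))
  refine ⟨Real.exp u₀, Real.exp_pos _, fun s hs => ?_⟩
  have hs0 : 0 < |s| := (Real.exp_pos _).trans_le hs
  have h1 := hu₀ (Real.log |s|) ((Real.le_log_iff_exp_le hs0).2 hs)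
  rw [Real.exp_log hs0, norm_charFun_abs] at h1
  exact (lt_of_pow_lt_pow_left₀ 2 hε.le h1).le

end SelfSimilar

/-! ### Oscillatory integrals over small copies of the measure -/

/-- The affine maps `x ↦ ρ * x + τ` that are finite compositions of the maps `x ↦ r i * x + t i`. -/
inductive Branch {n : ℕ} (r t : Fin n → ℝ) : ℝ → ℝ → Prop
  | id : Branch r t 1 0
  | comp {ρ τ : ℝ} (h : Branch r t ρ τ) (i : Fin n) : Branch r t (ρ * r i) (ρ * t i + τ)

lemma Branch.mapsTo {n : ℕ} {r t : Fin n → ℝ} {a b : ℝ}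
    (hmaps : ∀ i, MapsTo (fun x => r i * x + t i) (Icc a b) (Icc a b)) {ρ τ : ℝ}
    (h : Branch r t ρ τ) : ∀ x ∈ Icc a b, ρ * x + τ ∈ Icc a b := by
  induction h with
  | id => intro x hx; simpa using hx
  | comp _ i ih =>
    intro x hx
    have := ih _ (hmaps i hx)
    convert this using 1
    ring

lemma norm_cexp_sub_le (x y : ℝ) :
    ‖Complex.exp (x * Complex.I) - Complex.exp (y * Complex.I)‖ ≤ |x - y| := by
  have h1 : Complex.exp (x * Complex.I) - Complex.exp (y * Complex.I) =
      Complex.exp (y * Complex.I) * (Complex.exp (Complex.I * ((x - y : ℝ) : ℂ)) - 1) := by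
    rw [mul_sub, ← Complex.exp_add, mul_one]
    push_cast
    ring_nf
  rw [h1, norm_mul, Complex.norm_exp_ofReal_mul_I, one_mul]
  simpa using Real.norm_exp_I_mul_ofReal_sub_one_le (x := x - y)

/-- First order Taylor expansion of a `C¹` function, uniformly on a compact interval. -/
lemma uniform_taylor {g : ℝ → ℝ} (hg : ContDiff ℝ 1 g) (a b : ℝ) {η : ℝ} (hη : 0 < η) :
    ∃ δ > 0, ∀ x ∈ Icc a b, ∀ y ∈ Icc a b, |x - y| ≤ δ →
      |g x - g y - deriv g y * (x - y)| ≤ η * |x - y| := by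
  have hdc : Continuous (deriv g) := hg.continuous_deriv le_rfl
  have hdiff : Differentiable ℝ g := hg.differentiable one_ne_zero
  have huc := (isCompact_Icc (a := a) (b := b)).uniformContinuousOn_of_continuous hdc.continuousOn
  rw [Metric.uniformContinuousOn_iff] at huc
  obtain ⟨δ, hδ, hδ'⟩ := huc η hη
  refine ⟨δ / 2, by positivity, fun x hx y hy hxy => ?_⟩
  have hsub : uIcc y x ⊆ Icc a b := (ordConnected_Icc).uIcc_subset hy hx
  have h1 := (convex_uIcc y x).norm_image_sub_le_of_norm_hasDerivWithin_le
    (f := fun z => g z - deriv g y * z) (f' := fun z => deriv g z - deriv g y) (C := η)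
    (fun z _ => by
      have := (hdiff z).hasDerivAt.sub ((hasDerivAt_id z).const_mul (deriv g y))
      rw [mul_one] at this
      exact this.hasDerivWithinAt)
    (fun z hz => by
      refine (hδ' z (hsub hz) y hy ?_).le
      have : |z - y| ≤ |x - y| := abs_sub_left_of_mem_uIcc hz
      rw [Real.dist_eq]
      linarith)
    left_mem_uIcc right_mem_uIcc
  rw [Real.norm_eq_abs, Real.norm_eq_abs] at h1
  convert h1 using 2
  ring

namespace SelfSimilar

variable {n : ℕ} {r t P : Fin n → ℝ} {ν : Measure ℝ}

/-- Cut-set principle: a convex constraint satisfied by the integrals of `F` over all branches with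
contraction ratio in `[ρ₀ δ, δ]` is satisfied by the integrals over all larger branches, these being
convex combinations of the former. -/
lemma integral_mem_of_cutset (S : SelfSimilar r t P ν) {E : Type*} [NormedAddCommGroup E]
    [NormedSpace ℝ E] [SecondCountableTopology E] {K : Set E} (hK : Convex ℝ K) {F : ℝ → E}
    (hF : Continuous F) {C : ℝ} (hC : ∀ x, ‖F x‖ ≤ C) {ρ₀ δ : ℝ} (hρ₀ : 0 < ρ₀)
    (hρ : ∀ i, ρ₀ ≤ |r i|) (hδ : 0 < δ)
    (h : ∀ ρ τ, Branch r t ρ τ → ρ₀ * δ ≤ |ρ| → |ρ| ≤ δ → ∫ x, F (ρ * x + τ) ∂ν ∈ K)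
    {ρ τ : ℝ} (hB : Branch r t ρ τ) (hρδ : ρ₀ * δ ≤ |ρ|) :
    ∫ x, F (ρ * x + τ) ∂ν ∈ K := by
  obtain ⟨ρ', hρ'0, hρ'1, hρ'⟩ := S.exists_rmax
  have key : ∀ k : ℕ, ∀ ρ τ, Branch r t ρ τ → ρ₀ * δ ≤ |ρ| → |ρ| * ρ' ^ k ≤ δ →
      ∫ x, F (ρ * x + τ) ∂ν ∈ K := by
    intro k
    induction k with
    | zero => intro ρ τ hB h1 h2; exact h ρ τ hB h1 (by simpa using h2)
    | succ k ih =>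
      intro ρ τ hB h1 h2
      rcases le_or_gt |ρ| δ with h3 | h3
      · exact h ρ τ hB h1 h3
      · rw [S.integral_eq (F := fun x => F (ρ * x + τ)) (C := C) (by fun_prop) fun x => hC _]
        refine hK.sum_mem (fun i _ => (S.pos i).le) S.sum fun i _ => ?_
        have h4 := ih (ρ * r i) (ρ * t i + τ) (hB.comp i) ?_ ?_
        · convert h4 using 3
          ring_nf
        · rw [abs_mul, mul_comm]
          exact mul_le_mul h3.le (hρ i) hρ₀.le (abs_nonneg _)
        · rw [abs_mul]
          calc |ρ| * |r i| * ρ' ^ k ≤ |ρ| * ρ' * ρ' ^ k := by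
                gcongr
                exact hρ' i
            _ = |ρ| * ρ' ^ (k + 1) := by ring
            _ ≤ δ := h2
  have hlim : Tendsto (fun k : ℕ => |ρ| * ρ' ^ k) atTop (𝓝 0) := by
    simpa using (tendsto_pow_atTop_nhds_zero_of_lt_one hρ'0.le hρ'1).const_mul |ρ|
  obtain ⟨k, hk⟩ := (hlim.eventually (gt_mem_nhds hδ)).exists
  exact key k ρ τ hB hρδ hk.le

/-- Oscillatory integrals over branches whose size is a large constant times the wavelength are
small: on such a branch `g` is affine up to a small fraction of the wavelength, so the integral is a
value of the characteristic function of `ν` at a large frequency. -/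
lemma branch_small (S : SelfSimilar r t P ν)
    (hsmall : ∀ ε : ℝ, 0 < ε → ∃ T > 0, ∀ s, T ≤ |s| → ‖charFun ν s‖ ≤ ε)
    {a b : ℝ} (hab : a < b) (hmaps : ∀ i, MapsTo (fun x => r i * x + t i) (Icc a b) (Icc a b))
    {g : ℝ → ℝ} (hg : ContDiff ℝ 1 g) (hg' : ∀ x ∈ Icc a b, deriv g x ≠ 0)
    {ρ₀ : ℝ} (hρ₀ : 0 < ρ₀) {ε : ℝ} (hε : 0 < ε) :
    ∃ T > 0, ∃ Q > 0, ∀ q ρ τ, Branch r t ρ τ → Q ≤ |q| → T ≤ |q| * |ρ| → |q| * |ρ| ≤ T / ρ₀ →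
      ‖∫ x, Complex.exp ((2 * Real.pi * q * g (ρ * x + τ) : ℝ) * Complex.I) ∂ν‖ ≤ ε := by
  have := S.prob
  have hdc : Continuous (deriv g) := hg.continuous_deriv le_rfl
  have hgc : Continuous g := hg.continuous
  obtain ⟨y, hy, hymin⟩ := (isCompact_Icc (a := a) (b := b)).exists_isMinOn
    ⟨a, le_rfl, hab.le⟩ hdc.abs.continuousOn
  set c := |deriv g y| with hc
  have hc0 : 0 < c := abs_pos.2 (hg' y hy)
  have hcle : ∀ x ∈ Icc a b, c ≤ |deriv g x| := fun x hx => hymin hx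
  obtain ⟨T₁, hT₁, hT₁'⟩ := hsmall (ε / 2) (half_pos hε)
  set T := T₁ / c with hT
  have hT0 : 0 < T := by positivity
  have hpi := Real.pi_gt_three
  have hba : 0 < b - a := sub_pos.2 hab
  set η := ε / 2 / (2 * Real.pi * (T / ρ₀) * (b - a)) with hη
  have hη0 : 0 < η := by positivity
  obtain ⟨δ, hδ, htay⟩ := uniform_taylor hg a b hη0
  refine ⟨T, hT0, T / ρ₀ * (b - a) / δ, by positivity, fun q ρ τ hB hQ h1 h2 => ?_⟩
  have hmem := hB.mapsTo hmaps
  set y₀ := ρ * a + τ with hy₀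
  have hy₀m : y₀ ∈ Icc a b := hmem a ⟨le_rfl, hab.le⟩
  set d := deriv g y₀ with hd
  have hρδ : |ρ| * (b - a) ≤ δ := by
    have hq0 : 0 < |q| := lt_of_lt_of_le (by positivity) hQ
    rw [div_le_iff₀ hδ] at hQ
    have h3 : |q| * (|ρ| * (b - a)) ≤ |q| * δ := by nlinarith
    exact le_of_mul_le_mul_left h3 hq0
  have hlin : ∀ x ∈ Icc a b,
      |g (ρ * x + τ) - (g y₀ + d * (ρ * (x - a)))| ≤ η * (|ρ| * (b - a)) := by
    intro x hx
    have e : ρ * x + τ - y₀ = ρ * (x - a) := by rw [hy₀]; ring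
    have h3 : |ρ * x + τ - y₀| ≤ |ρ| * (b - a) := by
      rw [e, abs_mul, abs_of_nonneg (sub_nonneg.2 hx.1)]
      exact mul_le_mul_of_nonneg_left (by linarith [hx.2]) (abs_nonneg _)
    have h4 := htay _ (hmem x hx) y₀ hy₀m (h3.trans hρδ)
    rw [e] at h4
    rw [← sub_sub]
    refine h4.trans (mul_le_mul_of_nonneg_left ?_ hη0.le)
    rwa [e] at h3
  set A : ℝ → ℂ := fun x => Complex.exp ((2 * Real.pi * q * g (ρ * x + τ) : ℝ) * Complex.I) with hA
  set B : ℝ → ℂ := fun x =>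
    Complex.exp ((2 * Real.pi * q * (g y₀ + d * (ρ * (x - a))) : ℝ) * Complex.I) with hBdef
  have hAi : Integrable A ν := S.integrable_of_bounded (C := 1) (by fun_prop)
    fun x => (Complex.norm_exp_ofReal_mul_I _).le
  have hBi : Integrable B ν := S.integrable_of_bounded (C := 1) (by fun_prop)
    fun x => (Complex.norm_exp_ofReal_mul_I _).le
  have hdiff : ‖∫ x, A x ∂ν - ∫ x, B x ∂ν‖ ≤ ε / 2 := by
    rw [← integral_sub hAi hBi]
    have hb : ∀ᵐ x ∂ν, ‖A x - B x‖ ≤ ε / 2 := by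
      filter_upwards [S.ae_mem_Icc hab hmaps] with x hx
      refine (norm_cexp_sub_le _ _).trans ?_
      rw [← mul_sub, abs_mul, abs_mul, abs_of_pos (by positivity : 0 < 2 * Real.pi)]
      calc 2 * Real.pi * |q| * |g (ρ * x + τ) - (g y₀ + d * (ρ * (x - a)))|
          ≤ 2 * Real.pi * |q| * (η * (|ρ| * (b - a))) := by
            gcongr
            exact hlin x hx
        _ = 2 * Real.pi * (b - a) * η * (|q| * |ρ|) := by ring
        _ ≤ 2 * Real.pi * (b - a) * η * (T / ρ₀) := by gcongr
        _ = ε / 2 := by rw [hη]; field_simp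
    simpa using norm_integral_le_of_norm_le_const hb
  have hBval : ‖∫ x, B x ∂ν‖ ≤ ε / 2 := by
    have e : ∫ x, B x ∂ν = Complex.exp ((2 * Real.pi * q * (g y₀ - d * ρ * a) : ℝ) * Complex.I) *
        charFun ν (2 * Real.pi * q * d * ρ) := by
      rw [charFun_apply_real, ← integral_const_mul]
      congr 1
      funext x
      rw [hBdef, ← Complex.exp_add]
      push_cast
      ring_nf
    rw [e, norm_mul, Complex.norm_exp_ofReal_mul_I, one_mul]
    refine hT₁' _ ?_
    rw [abs_mul, abs_mul, abs_mul, abs_of_pos (by positivity : 0 < 2 * Real.pi)]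
    calc T₁ = c * T := by rw [hT]; field_simp
      _ ≤ |d| * (|q| * |ρ|) := mul_le_mul (hcle _ hy₀m) h1 hT0.le (abs_nonneg _)
      _ ≤ 2 * Real.pi * (|d| * (|q| * |ρ|)) :=
        le_mul_of_one_le_left (by positivity) (by linarith)
      _ = 2 * Real.pi * |q| * |d| * |ρ| := by ring
  calc ‖∫ x, A x ∂ν‖ = ‖(∫ x, A x ∂ν - ∫ x, B x ∂ν) + ∫ x, B x ∂ν‖ := by rw [sub_add_cancel]
    _ ≤ ε / 2 + ε / 2 := (norm_add_le _ _).trans (add_le_add hdiff hBval)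
    _ = ε := by ring

/-- The image of `ν` under `g` is a Rajchman measure, in `ε`-form. -/
lemma image_small (S : SelfSimilar r t P ν)
    (hsmall : ∀ ε : ℝ, 0 < ε → ∃ T > 0, ∀ s, T ≤ |s| → ‖charFun ν s‖ ≤ ε)
    {a b : ℝ} (hab : a < b) (hmaps : ∀ i, MapsTo (fun x => r i * x + t i) (Icc a b) (Icc a b))
    {g : ℝ → ℝ} (hg : ContDiff ℝ 1 g) (hg' : ∀ x ∈ Icc a b, deriv g x ≠ 0)
    {ε : ℝ} (hε : 0 < ε) :
    ∃ Q > 0, ∀ q, Q ≤ |q| →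
      ‖∫ x, Complex.exp ((2 * Real.pi * q * g x : ℝ) * Complex.I) ∂ν‖ ≤ ε := by
  obtain ⟨ρ₀, hρ₀, hρ₀1, hρ⟩ := S.exists_rmin
  have hgc : Continuous g := hg.continuous
  obtain ⟨T, hT, Q, hQ, hkey⟩ := S.branch_small hsmall hab hmaps hg hg' hρ₀ hε
  refine ⟨max Q T, by positivity, fun q hq => ?_⟩
  have hqQ := (le_max_left _ _).trans hq
  have hqT := (le_max_right _ _).trans hq
  have hq0 : 0 < |q| := hQ.trans_le hqQ
  have h := S.integral_mem_of_cutset (K := Metric.closedBall (0 : ℂ) ε) (convex_closedBall _ _)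
    (F := fun x => Complex.exp ((2 * Real.pi * q * g x : ℝ) * Complex.I)) (by fun_prop)
    (C := 1) (fun x => (Complex.norm_exp_ofReal_mul_I _).le) (ρ₀ := ρ₀) (δ := T / (ρ₀ * |q|))
    hρ₀ hρ (by positivity) (fun ρ τ hB h1 h2 => ?_) Branch.id ?_
  · simpa using h
  · rw [mem_closedBall_zero_iff]
    refine hkey q ρ τ hB hqQ ?_ ?_
    · have : ρ₀ * (T / (ρ₀ * |q|)) = T / |q| := by field_simp
      rw [this, div_le_iff₀ hq0] at h1
      linarith
    · rw [le_div_iff₀ (by positivity)] at h2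
      rw [le_div_iff₀ hρ₀]
      linarith
  · have : ρ₀ * (T / (ρ₀ * |q|)) = T / |q| := by field_simp
    rw [this, abs_one, div_le_one hq0]
    exact hqT

end SelfSimilar

/-! ### Lacunary cosine sums -/

namespace SelfSimilar

variable {n : ℕ} {r t P : Fin n → ℝ} {ν : Measure ℝ}

/-- Exponential moment bound for sums of functions living on separated scales. If `u j` has small
mean on every branch of size about `δ j` and is nearly constant on every branch of size at most
`δ (j + 1)`, the `u j` behave like independent almost centred variables. -/
lemma integral_exp_sum_le (S : SelfSimilar r t P ν) {a b : ℝ} (hab : a < b)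
    (hmaps : ∀ i, MapsTo (fun x => r i * x + t i) (Icc a b) (Icc a b))
    {ρ₀ : ℝ} (hρ₀ : 0 < ρ₀) (hρ : ∀ i, ρ₀ ≤ |r i|) {ε : ℝ} (hε : 0 < ε) (hε1 : ε ≤ 1)
    {u : ℕ → ℝ → ℝ} (hu : ∀ j, Continuous (u j)) (hu1 : ∀ j x, |u j x| ≤ 1)
    {δ : ℕ → ℝ} (hδ : ∀ j, 0 < δ j) (hδa : ∀ j, δ (j + 1) ≤ δ j) (hδ1 : ρ₀ * δ 0 ≤ 1)
    (hosc : ∀ j ρ τ, Branch r t ρ τ → |ρ| ≤ δ (j + 1) → ∀ x ∈ Icc a b, ∀ y ∈ Icc a b,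
      |u j (ρ * x + τ) - u j (ρ * y + τ)| ≤ ε)
    (hmean : ∀ j ρ τ, Branch r t ρ τ → ρ₀ * δ j ≤ |ρ| → |ρ| ≤ δ j →
      ∫ x, u j (ρ * x + τ) ∂ν ≤ ε) (J : ℕ) :
    ∫ x, Real.exp (ε * ∑ i ∈ Finset.range J, u i x) ∂ν ≤ Real.exp (4 * ε ^ 2 * J) := by
  have := S.prob
  have hsum : ∀ (s j : ℕ) (x : ℝ), |∑ i ∈ Finset.range s, u (j + i) x| ≤ s := by
    intro s j x
    refine (Finset.abs_sum_le_sum_abs _ _).trans ?_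
    simpa using Finset.sum_le_sum (s := Finset.range s) fun i _ => hu1 (j + i) x
  have hcont : ∀ s j : ℕ,
      Continuous (fun x => Real.exp (ε * ∑ i ∈ Finset.range s, u (j + i) x)) := by
    intro s j
    have : Continuous (fun x => ∑ i ∈ Finset.range s, u (j + i) x) :=
      continuous_finsetSum _ fun i _ => hu (j + i)
    fun_prop
  have hbd : ∀ (s j : ℕ) (x : ℝ),
      ‖Real.exp (ε * ∑ i ∈ Finset.range s, u (j + i) x)‖ ≤ Real.exp s := by
    intro s j x
    rw [Real.norm_eq_abs, Real.abs_exp, Real.exp_le_exp]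
    have h1 := abs_le.1 (hsum s j x)
    have h2 : (0 : ℝ) ≤ s := Nat.cast_nonneg s
    nlinarith [mul_le_mul_of_nonneg_left h1.2 hε.le]
  have hint : ∀ (s j : ℕ) (ρ τ : ℝ), Integrable
      (fun x => Real.exp (ε * ∑ i ∈ Finset.range s, u (j + i) (ρ * x + τ))) ν := fun s j ρ τ =>
    S.integrable_of_bounded (C := Real.exp s)
      ((hcont s j).comp (by fun_prop : Continuous fun x => ρ * x + τ)) fun x => hbd s j _
  have hucont : ∀ j, Continuous (fun x => Real.exp (ε * u j x)) := fun j => by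
    have := hu j
    fun_prop
  have hubd : ∀ j x, ‖Real.exp (ε * u j x)‖ ≤ Real.exp 1 := by
    intro j x
    rw [Real.norm_eq_abs, Real.abs_exp, Real.exp_le_exp]
    nlinarith [(abs_le.1 (hu1 j x)).2]
  have huint : ∀ (j : ℕ) (ρ τ : ℝ), Integrable (fun x => Real.exp (ε * u j (ρ * x + τ))) ν :=
    fun j ρ τ => S.integrable_of_bounded (C := Real.exp 1)
      ((hucont j).comp (by fun_prop : Continuous fun x => ρ * x + τ)) fun x => hubd j _
  -- exponential moment of a single term
  have hone : ∀ j ρ τ, Branch r t ρ τ → ρ₀ * δ j ≤ |ρ| → |ρ| ≤ δ j →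
      ∫ x, Real.exp (ε * u j (ρ * x + τ)) ∂ν ≤ Real.exp (2 * ε ^ 2) := by
    intro j ρ τ hB h1 h2
    have hi : Integrable (fun x => u j (ρ * x + τ)) ν :=
      S.integrable_of_bounded (C := 1) ((hu j).comp (by fun_prop)) fun x => hu1 j _
    calc ∫ x, Real.exp (ε * u j (ρ * x + τ)) ∂ν
        ≤ ∫ x, (ε * u j (ρ * x + τ) + (1 + ε ^ 2)) ∂ν := by
          refine integral_mono (huint j ρ τ) ((hi.const_mul ε).add (integrable_const _)) fun x => ?_
          have h3 : |ε * u j (ρ * x + τ)| ≤ ε := by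
            rw [abs_mul, abs_of_pos hε]
            nlinarith [hu1 j (ρ * x + τ)]
          have h4 := (abs_le.1 (Real.abs_exp_sub_one_sub_id_le (h3.trans hε1))).2
          have h5 : (ε * u j (ρ * x + τ)) ^ 2 ≤ ε ^ 2 := sq_le_sq' (abs_le.1 h3).1 (abs_le.1 h3).2
          show Real.exp (ε * u j (ρ * x + τ)) ≤ ε * u j (ρ * x + τ) + (1 + ε ^ 2)
          linarith
      _ = ε * ∫ x, u j (ρ * x + τ) ∂ν + (1 + ε ^ 2) := by
          rw [integral_add (hi.const_mul ε) (integrable_const _), integral_const_mul]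
          simp
      _ ≤ 2 * ε ^ 2 + 1 := by nlinarith [hmean j ρ τ hB h1 h2]
      _ ≤ Real.exp (2 * ε ^ 2) := Real.add_one_le_exp _
  have key : ∀ s j ρ τ, Branch r t ρ τ → ρ₀ * δ j ≤ |ρ| → |ρ| ≤ δ j →
      ∫ x, Real.exp (ε * ∑ i ∈ Finset.range s, u (j + i) (ρ * x + τ)) ∂ν ≤
        Real.exp (4 * ε ^ 2 * s) := by
    intro s
    induction s with
    | zero => intro j ρ τ _ _ _; simp
    | succ s ih =>
      intro j ρ τ hB h1 h2
      set D := Real.exp (4 * ε ^ 2 * s) * Real.exp (2 * ε ^ 2) with hD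
      have hsplit : ∀ x, Real.exp (ε * ∑ i ∈ Finset.range (s + 1), u (j + i) x) =
          Real.exp (ε * u j x) * Real.exp (ε * ∑ i ∈ Finset.range s, u (j + 1 + i) x) := by
        intro x
        rw [← Real.exp_add, Finset.sum_range_succ', add_zero, mul_add, add_comm]
        simp only [add_assoc, add_comm 1]
      have hcut := S.integral_mem_of_cutset (convex_Ici (0 : ℝ)) (F := fun x =>
          D * Real.exp (ε * u j x) - Real.exp (ε * ∑ i ∈ Finset.range (s + 1), u (j + i) x))
        (((hucont j).const_mul D).sub (hcont (s + 1) j))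
        (C := D * Real.exp 1 + Real.exp ((s + 1 : ℕ) : ℝ)) (fun x => by
          refine (norm_sub_le _ _).trans (add_le_add ?_ (hbd (s + 1) j x))
          rw [norm_mul, Real.norm_of_nonneg (by positivity : 0 ≤ D)]
          exact mul_le_mul_of_nonneg_left (hubd j x) (by positivity))
        hρ₀ hρ (hδ (j + 1)) (fun ρ' τ' hB' h1' h2' => ?_) hB
        ((mul_le_mul_of_nonneg_left (hδa j) hρ₀.le).trans h1)
      · rw [mem_Ici, integral_sub ((huint j ρ τ).const_mul D) (hint (s + 1) j ρ τ),
          integral_const_mul, sub_nonneg] at hcut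
        refine hcut.trans ((mul_le_mul_of_nonneg_left (hone j ρ τ hB h1 h2)
          (by positivity)).trans_eq ?_)
        rw [hD, ← Real.exp_add, ← Real.exp_add]
        congr 1
        push_cast
        ring
      · rw [mem_Ici, integral_sub ((huint j ρ' τ').const_mul D) (hint (s + 1) j ρ' τ'),
          integral_const_mul, sub_nonneg]
        -- `u j` is within `ε` of the constant `c` along the branch
        set c := u j (ρ' * a + τ') with hc
        have hca : ∀ᵐ x ∂ν, |u j (ρ' * x + τ') - c| ≤ ε := by
          filter_upwards [S.ae_mem_Icc hab hmaps] with x hx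
          exact hosc j ρ' τ' hB' h2' x hx a ⟨le_rfl, hab.le⟩
        calc ∫ x, Real.exp (ε * ∑ i ∈ Finset.range (s + 1), u (j + i) (ρ' * x + τ')) ∂ν
            ≤ ∫ x, Real.exp (ε * c + ε ^ 2) *
                Real.exp (ε * ∑ i ∈ Finset.range s, u (j + 1 + i) (ρ' * x + τ')) ∂ν := by
              refine integral_mono_ae (hint _ _ _ _) ((hint _ _ _ _).const_mul _) ?_
              filter_upwards [hca] with x hx
              rw [hsplit]
              refine mul_le_mul_of_nonneg_right (Real.exp_le_exp.2 ?_) (Real.exp_pos _).le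
              nlinarith [(abs_le.1 hx).2]
          _ ≤ Real.exp (ε * c + ε ^ 2) * Real.exp (4 * ε ^ 2 * s) := by
              rw [integral_const_mul]
              exact mul_le_mul_of_nonneg_left (ih (j + 1) ρ' τ' hB' h1' h2') (Real.exp_pos _).le
          _ = D * Real.exp (ε * c - ε ^ 2) := by
              rw [hD, ← Real.exp_add, ← Real.exp_add, ← Real.exp_add]
              congr 1
              ring
          _ ≤ D * ∫ x, Real.exp (ε * u j (ρ' * x + τ')) ∂ν := by
              refine mul_le_mul_of_nonneg_left ?_ (by positivity)
              have h3 : ∫ _, Real.exp (ε * c - ε ^ 2) ∂ν ≤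
                  ∫ x, Real.exp (ε * u j (ρ' * x + τ')) ∂ν := by
                refine integral_mono_ae (integrable_const _) (huint _ _ _) ?_
                filter_upwards [hca] with x hx
                refine Real.exp_le_exp.2 ?_
                nlinarith [(abs_le.1 hx).1]
              simpa using h3
  have h := S.integral_mem_of_cutset (convex_Iic (Real.exp (4 * ε ^ 2 * J)))
    (F := fun x => Real.exp (ε * ∑ i ∈ Finset.range J, u (0 + i) x)) (hcont J 0) (hbd J 0)
    hρ₀ hρ (hδ 0) (fun ρ τ hB h1 h2 => key J 0 ρ τ hB h1 h2) Branch.id (by simpa using hδ1)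
  simpa using h

/-- Along sufficiently lacunary frequencies, cosine sums are almost surely small compared with their
length, with the same lacunarity constant `B` for all phases: the exponential moment bound and
Chernoff's inequality give summable probabilities `exp (-2 ε² J)`. -/
lemma ae_sum_cos_le (S : SelfSimilar r t P ν)
    (hsmall : ∀ ε : ℝ, 0 < ε → ∃ T > 0, ∀ s, T ≤ |s| → ‖charFun ν s‖ ≤ ε)
    {a b : ℝ} (hab : a < b) (hmaps : ∀ i, MapsTo (fun x => r i * x + t i) (Icc a b) (Icc a b))
    {g : ℝ → ℝ} (hg : ContDiff ℝ 1 g) (hg' : ∀ x ∈ Icc a b, deriv g x ≠ 0)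
    {ε : ℝ} (hε : 0 < ε) (hε1 : ε ≤ 1) :
    ∃ B ≥ 1, ∃ Q > 0, ∀ q : ℕ → ℝ, Q ≤ q 0 → (∀ j, B * q j ≤ q (j + 1)) → ∀ α : ℝ,
      ∀ᵐ x ∂ν, ∀ᶠ J : ℕ in atTop,
        ∑ j ∈ Finset.range J, Real.cos (2 * Real.pi * q j * g x + α) ≤ 6 * ε * J := by
  have := S.prob
  obtain ⟨ρ₀, hρ₀, hρ₀1, hρ⟩ := S.exists_rmin
  have hgc : Continuous g := hg.continuous
  have hdc : Continuous (deriv g) := hg.continuous_deriv le_rfl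
  obtain ⟨T, hT, Q, hQ, hkey⟩ := S.branch_small hsmall hab hmaps hg hg' hρ₀ hε
  obtain ⟨M, hM⟩ := (isCompact_Icc (a := a) (b := b)).exists_bound_of_continuousOn hdc.continuousOn
  have hM0 : 0 ≤ M := (norm_nonneg _).trans (hM a ⟨le_rfl, hab.le⟩)
  have hlip : ∀ x ∈ Icc a b, ∀ y ∈ Icc a b, |g x - g y| ≤ M * |x - y| := by
    intro x hx y hy
    have h := (convex_Icc a b).norm_image_sub_le_of_norm_deriv_le
      (fun z _ => (hg.differentiable one_ne_zero) z) hM hy hx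
    simpa using h
  have hba : 0 < b - a := sub_pos.2 hab
  have hpi := Real.pi_pos
  set B := max 1 (2 * Real.pi * M * (b - a) * T / (ρ₀ * ε)) with hB
  have hB1 : 1 ≤ B := le_max_left _ _
  refine ⟨B, hB1, max Q T, by positivity, fun q hq0 hq α => ?_⟩
  have hqge : ∀ j, max Q T ≤ q j := by
    intro j
    induction j with
    | zero => exact hq0
    | succ j ih =>
      have h1 : 0 < q j := lt_of_lt_of_le (by positivity) ih
      nlinarith [hq j]
  have hqpos : ∀ j, 0 < q j := fun j => lt_of_lt_of_le (by positivity) (hqge j)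
  have hqmono : ∀ j, q j ≤ q (j + 1) := fun j => by nlinarith [hq j, hqpos j]
  have hmgf := S.integral_exp_sum_le hab hmaps hρ₀ hρ hε hε1
    (u := fun j x => Real.cos (2 * Real.pi * q j * g x + α)) (δ := fun j => T / (ρ₀ * q j))
    (fun j => by fun_prop) (fun j x => Real.abs_cos_le_one _)
    (fun j => div_pos hT (mul_pos hρ₀ (hqpos j)))
    (fun j => div_le_div_of_nonneg_left hT.le (mul_pos hρ₀ (hqpos j))
      (mul_le_mul_of_nonneg_left (hqmono j) hρ₀.le))
    (by
      have h1 := hqpos 0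
      have : ρ₀ * (T / (ρ₀ * q 0)) = T / q 0 := by field_simp
      rw [this, div_le_one h1]
      exact (le_max_right _ _).trans (hqge 0))
    (fun j ρ τ hBr hle x hx y hy => by
      have h1 := hqpos j
      have h2 := hqpos (j + 1)
      refine (Real.abs_cos_sub_cos_le _ _).trans ?_
      have e : 2 * Real.pi * q j * g (ρ * x + τ) + α - (2 * Real.pi * q j * g (ρ * y + τ) + α) =
          2 * Real.pi * q j * (g (ρ * x + τ) - g (ρ * y + τ)) := by ring
      have hxy : |x - y| ≤ b - a := abs_le.2 ⟨by linarith [hx.1, hy.2], by linarith [hx.2, hy.1]⟩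
      rw [e, abs_mul, abs_of_pos (by positivity)]
      calc 2 * Real.pi * q j * |g (ρ * x + τ) - g (ρ * y + τ)|
          ≤ 2 * Real.pi * q j * (M * (T / (ρ₀ * q (j + 1)) * (b - a))) := by
            refine mul_le_mul_of_nonneg_left ?_ (by positivity)
            refine (hlip _ (hBr.mapsTo hmaps x hx) _ (hBr.mapsTo hmaps y hy)).trans ?_
            refine mul_le_mul_of_nonneg_left ?_ hM0
            rw [add_sub_add_right_eq_sub, ← mul_sub, abs_mul]
            exact mul_le_mul hle hxy (abs_nonneg _) (by positivity)
        _ = (2 * Real.pi * M * (b - a) * T / (ρ₀ * ε)) * q j * (ε / q (j + 1)) := by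
            field_simp
        _ ≤ B * q j * (ε / q (j + 1)) := by
            gcongr
            exact le_max_right _ _
        _ ≤ q (j + 1) * (ε / q (j + 1)) := by
            gcongr
            exact hq j
        _ = ε := by field_simp)
    (fun j ρ τ hBr h1 h2 => by
      have hqj := hqpos j
      have h3 := hkey (q j) ρ τ hBr
        (by rw [abs_of_pos hqj]; exact (le_max_left _ _).trans (hqge j))
        (by
          have : ρ₀ * (T / (ρ₀ * q j)) = T / q j := by field_simp
          rw [this, div_le_iff₀ hqj] at h1
          rw [abs_of_pos hqj]
          linarith)
        (by
          rw [le_div_iff₀ (by positivity)] at h2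
          rw [abs_of_pos hqj, le_div_iff₀ hρ₀]
          linarith)
      set F : ℝ → ℂ :=
        fun x => Complex.exp ((2 * Real.pi * q j * g (ρ * x + τ) + α : ℝ) * Complex.I) with hF
      have hFi : Integrable F ν := S.integrable_of_bounded (C := 1) (by fun_prop)
        fun x => (Complex.norm_exp_ofReal_mul_I _).le
      have e1 : ∫ x, Real.cos (2 * Real.pi * q j * g (ρ * x + τ) + α) ∂ν = (∫ x, F x ∂ν).re := by
        have h4 := integral_re hFi
        simp only [hF, RCLike.re_to_complex, Complex.exp_ofReal_mul_I_re] at h4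
        exact h4
      have e2 : ∫ x, F x ∂ν = Complex.exp (α * Complex.I) *
          ∫ x, Complex.exp ((2 * Real.pi * q j * g (ρ * x + τ) : ℝ) * Complex.I) ∂ν := by
        rw [← integral_const_mul]
        congr 1
        funext x
        rw [hF, ← Complex.exp_add]
        push_cast
        ring_nf
      rw [e1]
      refine (Complex.re_le_norm _).trans ?_
      rwa [e2, norm_mul, Complex.norm_exp_ofReal_mul_I, one_mul])
  set X : ℕ → ℝ → ℝ :=
    fun J x => ∑ j ∈ Finset.range J, Real.cos (2 * Real.pi * q j * g x + α) with hX
  have hXc : ∀ J, Continuous (X J) := fun J => by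
    rw [hX]
    fun_prop
  have hXb : ∀ J x, X J x ≤ J := by
    intro J x
    have := Finset.sum_le_sum (s := Finset.range J)
      fun j _ => Real.cos_le_one (2 * Real.pi * q j * g x + α)
    simpa using this
  have hprob : ∀ J : ℕ, ν.real {x | 6 * ε * J ≤ X J x} ≤ Real.exp (-(2 * ε ^ 2)) ^ J := by
    intro J
    have h1 := ProbabilityTheory.measure_ge_le_exp_mul_mgf (μ := ν) (X := X J) (t := ε)
      (6 * ε * J) hε.le (S.integrable_of_bounded (C := Real.exp J)
        (by have := hXc J; fun_prop) fun x => by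
          rw [Real.norm_eq_abs, Real.abs_exp, Real.exp_le_exp]
          have : (0 : ℝ) ≤ J := Nat.cast_nonneg J
          nlinarith [mul_le_mul_of_nonneg_left (hXb J x) hε.le])
    refine h1.trans ((mul_le_mul_of_nonneg_left (hmgf J) (Real.exp_pos _).le).trans_eq ?_)
    rw [← Real.exp_add, ← Real.exp_nat_mul]
    congr 1
    ring
  have hsumm : Summable fun J : ℕ => Real.exp (-(2 * ε ^ 2)) ^ J :=
    summable_geometric_of_lt_one (Real.exp_pos _).le (by
      rw [Real.exp_lt_one_iff]
      nlinarith)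
  have hfin : ∑' J : ℕ, ν {x | 6 * ε * J ≤ X J x} ≠ ∞ := by
    refine ne_top_of_le_ne_top hsumm.tsum_ofReal_ne_top (ENNReal.tsum_le_tsum fun J => ?_)
    rw [← ofReal_measureReal (measure_ne_top _ _)]
    exact ENNReal.ofReal_le_ofReal (hprob J)
  filter_upwards [ae_eventually_notMem hfin] with x hx
  filter_upwards [hx] with J hJ
  exact (not_le.1 hJ).le

end SelfSimilar

/-! ### Weyl sums and normality -/

/-- A bound for averages along every residue class gives a bound for the full averages. -/
lemma eventually_sum_le_of_residues {d : ℕ → ℝ} (hd : ∀ k, d k ≤ 1) {m a₀ : ℕ} (hm : 0 < m)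
    {ε : ℝ} (hε : 0 < ε)
    (H : ∀ c < m, ∀ᶠ J : ℕ in atTop, ∑ j ∈ Finset.range J, d (a₀ + (j * m + c)) ≤ ε * J) :
    ∀ᶠ N : ℕ in atTop, ∑ k ∈ Finset.range N, d k ≤ 2 * ε * N := by
  have hle : ∀ (s : ℕ) (e : ℕ → ℕ), ∑ k ∈ Finset.range s, d (e k) ≤ s := by
    intro s e
    simpa using Finset.sum_le_sum (s := Finset.range s) fun k _ => hd (e k)
  have hblock : ∀ J : ℕ, ∑ k ∈ Finset.range (J * m), d (a₀ + k) =
      ∑ c ∈ Finset.range m, ∑ j ∈ Finset.range J, d (a₀ + (j * m + c)) := by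
    intro J
    induction J with
    | zero => simp
    | succ J ih =>
      simp only [Finset.sum_range_succ, Finset.sum_add_distrib]
      rw [add_mul, one_mul, Finset.sum_range_add, ih]
  have H' : ∀ᶠ J : ℕ in atTop, ∀ c ∈ Finset.range m,
      ∑ j ∈ Finset.range J, d (a₀ + (j * m + c)) ≤ ε * J :=
    (Filter.eventually_all_finset _).2 fun c hc => H c (Finset.mem_range.1 hc)
  obtain ⟨J₀, hJ₀⟩ := eventually_atTop.1 H'
  obtain ⟨N₁, hN₁⟩ := exists_nat_ge ((a₀ + m : ℝ) / ε)
  filter_upwards [eventually_ge_atTop (a₀ + J₀ * m), eventually_ge_atTop N₁] with N hN hN'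
  obtain ⟨N', rfl⟩ : ∃ N', N = a₀ + N' := ⟨N - a₀, by omega⟩
  set J := N' / m with hJ
  have hJ₀J : J₀ ≤ J := (Nat.le_div_iff_mul_le hm).2 (by omega)
  have hdiv : J * m + N' % m = N' := Nat.div_add_mod' N' m
  have hmod : N' % m ≤ m := (Nat.mod_lt _ hm).le
  have h1 : ∑ k ∈ Finset.range (J * m), d (a₀ + k) ≤ ε * (J * m) := by
    rw [hblock]
    refine (Finset.sum_le_sum (hJ₀ J hJ₀J)).trans_eq ?_
    simp
    ring
  have h2 : ∑ k ∈ Finset.range N', d (a₀ + k) ≤ ε * (J * m) + m := by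
    rw [← hdiv, Finset.sum_range_add]
    exact add_le_add h1 ((hle _ _).trans (by exact_mod_cast hmod))
  have h3 : (J : ℝ) * m ≤ (a₀ + N' : ℕ) := by
    exact_mod_cast (by omega : J * m ≤ a₀ + N')
  have h4 : (a₀ + m : ℝ) ≤ ε * (a₀ + N' : ℕ) := by
    rw [div_le_iff₀ hε] at hN₁
    have : (N₁ : ℝ) ≤ (a₀ + N' : ℕ) := by exact_mod_cast hN'
    nlinarith
  rw [Finset.sum_range_add]
  have h5 := hle a₀ fun k => k
  nlinarith

lemma integral_fourier_eq_zero {n : ℤ} (hn : n ≠ 0) :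
    ∫ z : UnitAddCircle, fourier n z = 0 := by
  have h := congrFun (fourierCoeff_fourier (T := 1) n) 0
  rw [Pi.single_eq_of_ne hn.symm] at h
  unfold fourierCoeff at h
  rw [AddCircle.integral_haarAddCircle] at h
  simpa [fourier_zero, -fourier_apply] using h

/-- Weyl's criterion: equidistribution of the orbit of `y` follows from the decay of its
exponential sums with positive integer frequencies. -/
lemma pNormal_of_weyl {p : ℕ} {y : ℝ}
    (hW : ∀ h : ℕ, 1 ≤ h → Tendsto (fun N : ℕ => (N : ℂ)⁻¹ *
      ∑ k ∈ Finset.Icc 1 N, Complex.exp ((2 * Real.pi * (h * (p : ℝ) ^ k) * y : ℝ) * Complex.I))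
      atTop (𝓝 0)) : PNormal p y := by
  have hprob : IsProbabilityMeasure (volume : Measure UnitAddCircle) :=
    ⟨UnitAddCircle.measure_univ⟩
  -- empirical averages along the orbit
  set A : C(UnitAddCircle, ℂ) → ℕ → ℂ := fun f N =>
    (N : ℂ)⁻¹ * ∑ k ∈ Finset.Icc 1 N, f (((p : ℝ) ^ k * y : ℝ)) with hA
  have hfpos : ∀ h : ℕ, 1 ≤ h → Tendsto (A (fourier (h : ℤ))) atTop (𝓝 0) := by
    intro h hh
    refine (hW h hh).congr fun N => ?_
    simp only [hA]
    refine congrArg _ (Finset.sum_congr rfl fun k _ => ?_)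
    rw [fourier_coe_apply]
    congr 1
    push_cast
    ring
  have hint : ∀ f : C(UnitAddCircle, ℂ), Integrable f := fun f =>
    f.continuous.integrable_of_hasCompactSupport (HasCompactSupport.of_compactSpace _)
  have hfour : ∀ h : ℤ, Tendsto (A (fourier h)) atTop (𝓝 (∫ z : UnitAddCircle, fourier h z)) := by
    intro h
    rcases lt_trichotomy h 0 with h0 | h0 | h0
    · obtain ⟨m, rfl⟩ : ∃ m : ℕ, h = -(m : ℤ) := ⟨h.natAbs, by omega⟩
      rw [integral_fourier_eq_zero h0.ne]
      have h1 := (Complex.continuous_conj.tendsto _).comp (hfpos m (by omega))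
      rw [map_zero] at h1
      refine h1.congr fun N => ?_
      simp [hA, fourier_neg, -fourier_apply]
    · subst h0
      have h1 : ∀ᶠ N : ℕ in atTop, (1 : ℂ) = A (fourier 0) N := by
        filter_upwards [eventually_ge_atTop 1] with N hN
        have : (N : ℂ) ≠ 0 := Nat.cast_ne_zero.2 (by omega)
        simp [hA, this]
      simpa using tendsto_const_nhds.congr' h1
    · obtain ⟨m, rfl⟩ : ∃ m : ℕ, h = (m : ℤ) := ⟨h.natAbs, by omega⟩
      rw [integral_fourier_eq_zero h0.ne']
      exact hfpos m (by omega)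
  have hspan : ∀ f ∈ Submodule.span ℂ (range (@fourier 1)),
      Tendsto (A f) atTop (𝓝 (∫ z : UnitAddCircle, f z)) := by
    intro f hf
    induction hf using Submodule.span_induction with
    | mem f hf =>
      obtain ⟨h, rfl⟩ := hf
      exact hfour h
    | zero => simp [hA]
    | add f₁ f₂ _ _ h₁ h₂ =>
      have h3 : ∫ z : UnitAddCircle, (f₁ + f₂) z = (∫ z, f₁ z) + ∫ z, f₂ z :=
        integral_add (hint f₁) (hint f₂)
      rw [h3]
      convert h₁.add h₂ using 2 with N
      simp only [hA, ContinuousMap.add_apply, Finset.sum_add_distrib, mul_add]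
    | smul c f _ h₁ =>
      have h3 : ∫ z : UnitAddCircle, (c • f) z = c * ∫ z, f z := integral_const_mul c _
      rw [h3]
      convert h₁.const_mul c using 2 with N
      simp only [hA, ContinuousMap.smul_apply, smul_eq_mul, ← Finset.mul_sum]
      ring
  have hAle : ∀ f N, ‖A f N‖ ≤ ‖f‖ := by
    intro f N
    rcases Nat.eq_zero_or_pos N with rfl | hN
    · simp [hA]
    · have hN' : (0 : ℝ) < N := Nat.cast_pos.2 hN
      simp only [hA]
      rw [norm_mul, norm_inv, Complex.norm_natCast, inv_mul_le_iff₀ hN']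
      refine (norm_sum_le _ _).trans ?_
      simpa using Finset.sum_le_sum (s := Finset.Icc 1 N)
        fun k _ => f.norm_coe_le_norm (((p : ℝ) ^ k * y : ℝ) : UnitAddCircle)
  have hAsub : ∀ f₁ f₂ N, A (f₁ - f₂) N = A f₁ N - A f₂ N := by
    intro f₁ f₂ N
    simp only [hA, ContinuousMap.sub_apply, Finset.sum_sub_distrib, mul_sub]
  have hall : ∀ f, Tendsto (A f) atTop (𝓝 (∫ z : UnitAddCircle, f z)) := by
    intro f
    have hmem : f ∈ closure (Submodule.span ℂ (range (@fourier 1)) :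
        Set C(UnitAddCircle, ℂ)) := by
      have h1 : f ∈ (Submodule.span ℂ (range (@fourier 1))).topologicalClosure := by
        rw [span_fourier_closure_eq_top]
        trivial
      exact h1
    rw [Metric.tendsto_atTop]
    intro ε hε
    obtain ⟨f', hf', hdist⟩ := Metric.mem_closure_iff.1 hmem (ε / 3) (by positivity)
    obtain ⟨N₀, hN₀⟩ := Metric.tendsto_atTop.1 (hspan f' hf') (ε / 3) (by positivity)
    refine ⟨N₀, fun N hN => ?_⟩
    have h1 := hN₀ N hN
    rw [dist_eq_norm] at h1 hdist ⊢
    have h2 : ‖A f N - A f' N‖ ≤ ‖f - f'‖ := by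
      rw [← hAsub]
      exact hAle _ _
    have h3 : ‖(∫ z, f' z) - ∫ z, f z‖ ≤ ‖f - f'‖ := by
      rw [← integral_sub (hint f') (hint f)]
      have := norm_integral_le_of_norm_le_const (μ := (volume : Measure UnitAddCircle))
        (f := fun z => f' z - f z) (C := ‖f - f'‖) (Eventually.of_forall fun z => by
          rw [norm_sub_rev]
          exact (f - f').norm_coe_le_norm z)
      simpa using this
    calc ‖A f N - ∫ z, f z‖ = ‖(A f N - A f' N) + (A f' N - ∫ z, f' z) +
          ((∫ z, f' z) - ∫ z, f z)‖ := by congr 1; ring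
      _ ≤ ‖A f N - A f' N‖ + ‖A f' N - ∫ z, f' z‖ + ‖(∫ z, f' z) - ∫ z, f z‖ := norm_add₃_le
      _ < ε := by linarith
  intro φ
  have h1 := hall ⟨fun z => (φ z : ℂ), by fun_prop⟩
  have h2 := (Complex.continuous_re.tendsto _).comp h1
  have e : (∫ z : UnitAddCircle, (φ z : ℂ)) = ((∫ z, φ z : ℝ) : ℂ) := integral_ofReal
  simp only [ContinuousMap.coe_mk] at h2
  rw [e, Complex.ofReal_re] at h2
  refine h2.congr fun N => ?_
  simp only [hA, Function.comp, ContinuousMap.coe_mk]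
  rw [← Complex.ofReal_natCast, ← Complex.ofReal_inv, Complex.re_ofReal_mul, Complex.re_sum]
  simp

namespace SelfSimilar

variable {n : ℕ} {r t P : Fin n → ℝ} {ν : Measure ℝ}

/-- The geometric sequence `h * p ^ k` splits into finitely many residue classes of `k` on which it is
as lacunary as required. -/
lemma ae_eventually_sum_cos_le (S : SelfSimilar r t P ν)
    (hsmall : ∀ ε : ℝ, 0 < ε → ∃ T > 0, ∀ s, T ≤ |s| → ‖charFun ν s‖ ≤ ε)
    {a b : ℝ} (hab : a < b) (hmaps : ∀ i, MapsTo (fun x => r i * x + t i) (Icc a b) (Icc a b))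
    {g : ℝ → ℝ} (hg : ContDiff ℝ 1 g) (hg' : ∀ x ∈ Icc a b, deriv g x ≠ 0)
    {ε : ℝ} (hε : 0 < ε) (hε1 : ε ≤ 1) {p h : ℕ} (hp : 2 ≤ p) (hh : 1 ≤ h) (α : ℝ) :
    ∀ᵐ x ∂ν, ∀ᶠ N : ℕ in atTop,
      ∑ k ∈ Finset.range N, Real.cos (2 * Real.pi * (h * (p : ℝ) ^ (k + 1)) * g x + α) ≤
        12 * ε * N := by
  obtain ⟨B, hB, Q, hQ, hkey⟩ := S.ae_sum_cos_le hsmall hab hmaps hg hg' hε hε1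
  have hp1 : (1 : ℝ) < p := by exact_mod_cast (by omega : 1 < p)
  have hh1 : (1 : ℝ) ≤ h := by exact_mod_cast hh
  obtain ⟨m, hm⟩ := pow_unbounded_of_one_lt B hp1
  obtain ⟨a₀, ha₀⟩ := pow_unbounded_of_one_lt Q hp1
  have hm0 : 0 < m := by
    rcases Nat.eq_zero_or_pos m with rfl | h0
    · rw [pow_zero] at hm
      linarith
    · exact h0
  have hres : ∀ᵐ x ∂ν, ∀ c : ℕ, ∀ᶠ J : ℕ in atTop, ∑ j ∈ Finset.range J,
      Real.cos (2 * Real.pi * (h * (p : ℝ) ^ (a₀ + (j * m + c) + 1)) * g x + α) ≤ 6 * ε * J := by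
    rw [ae_all_iff]
    intro c
    refine hkey (fun j => h * (p : ℝ) ^ (a₀ + (j * m + c) + 1)) ?_ (fun j => ?_) α
    · have h1 : (p : ℝ) ^ a₀ ≤ (p : ℝ) ^ (a₀ + (0 * m + c) + 1) :=
        pow_le_pow_right₀ hp1.le (by omega)
      have h2 : (0 : ℝ) < (p : ℝ) ^ a₀ := by positivity
      show Q ≤ h * (p : ℝ) ^ (a₀ + (0 * m + c) + 1)
      nlinarith
    · show B * (h * (p : ℝ) ^ (a₀ + (j * m + c) + 1)) ≤
        h * (p : ℝ) ^ (a₀ + ((j + 1) * m + c) + 1)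
      have e : h * (p : ℝ) ^ (a₀ + ((j + 1) * m + c) + 1) =
          (p : ℝ) ^ m * (h * (p : ℝ) ^ (a₀ + (j * m + c) + 1)) := by ring
      rw [e]
      exact mul_le_mul_of_nonneg_right hm.le (by positivity)
  filter_upwards [hres] with x hx
  have h1 := eventually_sum_le_of_residues
    (d := fun k => Real.cos (2 * Real.pi * (h * (p : ℝ) ^ (k + 1)) * g x + α))
    (fun k => Real.cos_le_one _) hm0 (by positivity : 0 < 6 * ε) fun c _ => hx c
  filter_upwards [h1] with N hN
  linarith

/-- Weyl sums of almost every point of the image measure tend to zero. -/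
lemma ae_weyl (S : SelfSimilar r t P ν)
    (hsmall : ∀ ε : ℝ, 0 < ε → ∃ T > 0, ∀ s, T ≤ |s| → ‖charFun ν s‖ ≤ ε)
    {a b : ℝ} (hab : a < b) (hmaps : ∀ i, MapsTo (fun x => r i * x + t i) (Icc a b) (Icc a b))
    {g : ℝ → ℝ} (hg : ContDiff ℝ 1 g) (hg' : ∀ x ∈ Icc a b, deriv g x ≠ 0)
    {p h : ℕ} (hp : 2 ≤ p) (hh : 1 ≤ h) :
    ∀ᵐ x ∂ν, Tendsto (fun N : ℕ => (N : ℂ)⁻¹ * ∑ k ∈ Finset.Icc 1 N,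
      Complex.exp ((2 * Real.pi * (h * (p : ℝ) ^ k) * g x : ℝ) * Complex.I)) atTop (𝓝 0) := by
  have hα : ∀ α : ℝ, ∀ᵐ x ∂ν, ∀ l : ℕ, ∀ᶠ N : ℕ in atTop,
      ∑ k ∈ Finset.range N, Real.cos (2 * Real.pi * (h * (p : ℝ) ^ (k + 1)) * g x + α) ≤
        12 * (1 / (l + 1 : ℝ)) * N := by
    intro α
    rw [ae_all_iff]
    intro l
    refine S.ae_eventually_sum_cos_le hsmall hab hmaps hg hg' (by positivity) ?_ hp hh α
    rw [div_le_one (by positivity)]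
    have : (0 : ℝ) ≤ l := Nat.cast_nonneg l
    linarith
  -- the four phases give upper and lower bounds for the real and imaginary parts
  filter_upwards [hα 0, hα Real.pi, hα (Real.pi / 2), hα (-(Real.pi / 2))] with x h0 h1 h2 h3
  rw [Metric.tendsto_atTop]
  intro ε hε
  obtain ⟨l, hl⟩ := exists_nat_one_div_lt (by positivity : 0 < ε / 24)
  obtain ⟨N₀, hN₀⟩ := eventually_atTop.1
    ((h0 l).and ((h1 l).and ((h2 l).and ((h3 l).and (eventually_gt_atTop 0)))))
  refine ⟨N₀, fun N hN => ?_⟩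
  obtain ⟨c0, c1, c2, c3, hNpos⟩ := hN₀ N hN
  simp only [Real.cos_add_pi, Real.cos_add_pi_div_two, ← sub_eq_add_neg, Real.cos_sub_pi_div_two,
    add_zero, Finset.sum_neg_distrib] at c0 c1 c2 c3
  have hN' : (0 : ℝ) < N := Nat.cast_pos.2 hNpos
  have hIcc : ∑ k ∈ Finset.Icc 1 N,
      Complex.exp ((2 * Real.pi * (h * (p : ℝ) ^ k) * g x : ℝ) * Complex.I) =
      ∑ k ∈ Finset.range N,
        Complex.exp ((2 * Real.pi * (h * (p : ℝ) ^ (k + 1)) * g x : ℝ) * Complex.I) := by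
    rw [← Finset.Ico_add_one_right_eq_Icc, Finset.sum_Ico_eq_sum_range]
    simp only [Nat.add_sub_cancel, add_comm 1]
  rw [dist_zero_right, norm_mul, norm_inv, Complex.norm_natCast, inv_mul_lt_iff₀ hN', hIcc]
  refine (Complex.norm_le_abs_re_add_abs_im _).trans_lt ?_
  rw [Complex.re_sum, Complex.im_sum]
  simp only [Complex.exp_ofReal_mul_I_re, Complex.exp_ofReal_mul_I_im]
  have hre := abs_le.2 ⟨by linarith, c0⟩
  have him := abs_le.2 ⟨by linarith, c3⟩
  have : (1 / (l + 1 : ℝ)) * N < ε / 24 * N := mul_lt_mul_of_pos_right hl hN'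
  linarith

end SelfSimilar

theorem stmt3 {n : ℕ} (hn : 2 ≤ n) (r t : Fin n → ℝ) (f : Fin n → ℝ → ℝ)
    (hf : ∀ i x, f i x = r i * x + t i)
    (hr : ∀ i, 0 < |r i| ∧ |r i| < 1)
    (a b : ℝ) (hab : a < b)
    (hmaps : ∀ i, MapsTo (f i) (Icc a b) (Icc a b))
    (hfix : ∃ i j : Fin n, ∃ y ∈ Icc a b, ∃ z ∈ Icc a b, f i y = y ∧ f j z = z ∧ y ≠ z)
    (haper : ¬ ∃ c : ℝ, ∀ i, ∃ m : ℤ, Real.log |r i| = c * m)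
    (p : Fin n → ℝ≥0∞) (hp : ∀ i, 0 < p i) (hp1 : ∑ i, p i = 1)
    (ν : Measure ℝ) (hνP : IsProbabilityMeasure ν)
    (hν : ν = ∑ i, p i • ν.map (f i))
    (γ : ℝ) (hγ : 0 < γ) (g : ℝ → ℝ)
    (hg1 : ContDiff ℝ 1 g)
    (hgH : ∃ C : ℝ, 0 < C ∧ ∀ x ∈ Icc a b, ∀ y ∈ Icc a b,
      |deriv g x - deriv g y| ≤ C * |x - y| ^ γ)
    (hg' : ∀ x ∈ Icc a b, deriv g x ≠ 0) :
    PointwiseAbsolutelyNormal (ν.map g) ∧ Rajchman (ν.map g) := by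
  obtain rfl : f = fun i x => r i * x + t i := by
    funext i x
    exact hf i x
  have hptop : ∀ i, p i ≠ ∞ := fun i =>
    ne_top_of_le_ne_top (by rw [hp1]; exact ENNReal.one_ne_top)
      (Finset.single_le_sum (fun j _ => zero_le) (Finset.mem_univ i))
  have S : SelfSimilar r t (fun i => (p i).toReal) ν :=
    { prob := hνP
      pos := fun i => ENNReal.toReal_pos (hp i).ne' (hptop i)
      sum := by rw [← ENNReal.toReal_sum fun i _ => hptop i, hp1, ENNReal.toReal_one]
      r0 := fun i => (hr i).1
      r1 := fun i => (hr i).2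
      eq := by
        simp only [ENNReal.ofReal_toReal (hptop _)]
        exact hν }
  have hsmall : ∀ ε : ℝ, 0 < ε → ∃ T > 0, ∀ s, T ≤ |s| → ‖charFun ν s‖ ≤ ε := by
    obtain ⟨i, j, y, -, z, -, h1, h2, h3⟩ := hfix
    exact fun ε hε => S.charFun_small ⟨i, j, y, z, h1, h2, h3⟩ haper hε
  have hgc : Continuous g := hg1.continuous
  constructor
  · set D : Set ℝ := {y | ∀ p : ℕ, 2 ≤ p → ∀ h : ℕ, 1 ≤ h → Tendsto (fun N : ℕ => (N : ℂ)⁻¹ *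
      ∑ k ∈ Finset.Icc 1 N, Complex.exp ((2 * Real.pi * (h * (p : ℝ) ^ k) * y : ℝ) * Complex.I))
      atTop (𝓝 0)} with hD
    have hDm : MeasurableSet D := by
      simp only [hD, Set.ofPred_forall]
      refine MeasurableSet.iInter fun p => MeasurableSet.iInter fun _ => MeasurableSet.iInter
        fun h => MeasurableSet.iInter fun _ => measurableSet_tendsto _ fun N => ?_
      exact (by fun_prop : Continuous _).measurable
    have hDae : ∀ᵐ y ∂(ν.map g), y ∈ D := by
      refine (ae_map_iff (p := fun y => y ∈ D) hgc.aemeasurable hDm).2 ?_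
      simp only [hD, Set.mem_ofPred_eq, ae_all_iff]
      exact fun p hp h hh => S.ae_weyl hsmall hab hmaps hg1 hg' hp hh
    filter_upwards [hDae] with y hy
    exact fun p hp => pNormal_of_weyl fun h hh => hy p hp h hh
  · show Tendsto (fun q : ℝ => fourierTransform (ν.map g) q) (cocompact ℝ) (nhds 0)
    rw [Metric.tendsto_nhds]
    intro ε hε
    obtain ⟨Q, hQ, hQ'⟩ := S.image_small hsmall hab hmaps hg1 hg' (half_pos hε)
    filter_upwards [(tendsto_norm_cocompact_atTop (E := ℝ)).eventually_ge_atTop Q] with q hq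
    rw [dist_zero_right, fourierTransform, integral_map hgc.aemeasurable
      (by fun_prop : Continuous fun x : ℝ =>
        Complex.exp (((2 * Real.pi * q * x : ℝ) : ℂ) * Complex.I)).aestronglyMeasurable]
    exact (hQ' q hq).trans_lt (half_lt_self hε)
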